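/- arXiv:2604.05653 — 5 statements merged into one kernel-verified Lean document; each statement's English description precedes it below -/
import Mathlib

section
/- Assume four planar bodies move according to the stated ansatz with masses 1, 1, m2, m2 and G = 1. Then the four bodies satisfy Newton's equations of the 4-body problem, r⃗̈_i = Σ_{j≠i} m_j (r⃗_j − r⃗_i)/‖r⃗_j − r⃗_i‖³, if and only if the functions r1, θ, r2, β satisfy the system: r̈1 = r1 θ̇² − 1/(4 r1²) + m2[(r2 sin δ − r1)/d1³ + (−r2 sin δ − r1)/d2³], θ̈ = (m2 r2 cos δ (1/d1³ − 1/d2³) − 2 ṙ1 θ̇)/r1, r̈2 = r2 β̇² − m2/(4 r2²) + [(r1 sin δ − r2)/d1³ + (−r1 sin δ − r2)/d2³], and β̈ = (r1 cos δ (1/d2³ − 1/d1³) − 2 ṙ2 β̇)/r2. -/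
/-!
Central symmetry exchanges the bodies of each pair and reverses every acceleration, so Newton's
equations need only be checked for one body of each pair. For that body, both the acceleration and
the attraction by the three other bodies are resolved in the moving orthonormal frame formed by the
radial direction of angle `φ` and the transverse direction of angle `φ + π / 2`. Comparing
components gives a radial equation, which determines `r''`, and a transverse one, which determines
`φ''` because `r ≠ 0`. In the reduced system the angles of the pairs are `θ` and `β + π / 2`, so
the cosine of their difference is `sin δ`.
-/

open Real

noncomputable def vec2 (x y : ℝ) : EuclideanSpace ℝ (Fin 2) :=
  (WithLp.equiv 2 (Fin 2 → ℝ)).symm ![x, y]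

open Filter Finset
open scoped Topology

section NewtonianGravity

variable {ι E : Type*} [NormedAddCommGroup E] [NormedSpace ℝ E]

/-- The Newtonian acceleration, with gravitational constant `1`, which a mass `μ` at `q` gives to a
body at `p`. The value at `q = p` is `0`. -/
noncomputable def gravAttraction (μ : ℝ) (q p : E) : E :=
  (μ / ‖q - p‖ ^ 3) • (q - p)

/-- The acceleration of the `i`-th body under the attraction of all other bodies, that is, the
right-hand side of Newton's equations for masses `m` at positions `x`. -/
noncomputable def gravField [Fintype ι] [DecidableEq ι] (m : ι → ℝ) (x : ι → E) (i : ι) : E :=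
  ∑ j ∈ univ.erase i, gravAttraction (m j) (x j) (x i)

/-- The acceleration of a body at `p` due to a mass `μ` at the antipode `-p` and a pair of
masses `ν` at `q` and `-q`. -/
noncomputable def antipodalPairsField (μ ν : ℝ) (p q : E) : E :=
  gravAttraction μ (-p) p + (gravAttraction ν q p + gravAttraction ν (-q) p)

lemma gravAttraction_neg_neg (μ : ℝ) (q p : E) :
    gravAttraction μ (-q) (-p) = -gravAttraction μ q p := by
  have h : -q - -p = -(q - p) := by abel
  rw [gravAttraction, h, norm_neg, smul_neg, gravAttraction]

lemma gravAttraction_neg_self (μ : ℝ) (p : E) :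
    gravAttraction μ (-p) p = -(μ / (4 * ‖p‖ ^ 3)) • p := by
  have h : -p - p = (-2 : ℝ) • p := by module
  rw [gravAttraction, h, norm_smul, smul_smul]
  congr 1
  rw [norm_neg, norm_ofNat]
  ring

lemma deriv_deriv_neg (x : ℝ → E) (t : ℝ) : deriv (deriv (-x)) t = -deriv (deriv x) t := by
  simp only [deriv.neg', deriv.fun_neg]

section CentralSymmetry

variable [Fintype ι] [DecidableEq ι] {m : ι → ℝ} (σ : Equiv.Perm ι)

lemma gravField_perm_of_eq_neg {x : ι → E} (hm : ∀ i, m (σ i) = m i) (hx : ∀ i, x (σ i) = -x i)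
    (i : ι) : gravField m x (σ i) = -gravField m x i := by
  rw [gravField, gravField, ← sum_neg_distrib]
  refine (sum_equiv σ (by simp) fun j _ ↦ ?_).symm
  rw [hm, hx, hx, gravAttraction_neg_neg]

lemma newton_perm_iff_of_eventuallyEq_neg {x : ι → ℝ → E} {t : ℝ} (hm : ∀ i, m (σ i) = m i)
    (hx : ∀ i, x (σ i) =ᶠ[𝓝 t] -x i) (i : ι) :
    deriv (deriv (x (σ i))) t = gravField m (x · t) (σ i) ↔
      deriv (deriv (x i)) t = gravField m (x · t) i := by
  rw [(hx i).deriv.deriv_eq, deriv_deriv_neg,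
    gravField_perm_of_eq_neg σ hm fun j ↦ (hx j).eq_of_nhds, neg_inj]

end CentralSymmetry

section TwoAntipodalPairs

variable {m : Fin 4 → ℝ}

lemma gravField_zero_of_antipodal {x : Fin 4 → E} (hm1 : m 1 = m 0) (hm3 : m 3 = m 2)
    (hx1 : x 1 = -x 0) (hx3 : x 3 = -x 2) :
    gravField m x 0 = antipodalPairsField (m 0) (m 2) (x 0) (x 2) := by
  have others : univ.erase (0 : Fin 4) = {1, 2, 3} := by decide
  simp [gravField, antipodalPairsField, others, hm1, hm3, hx1, hx3]

lemma gravField_two_of_antipodal {x : Fin 4 → E} (hm1 : m 1 = m 0) (hm3 : m 3 = m 2)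
    (hx1 : x 1 = -x 0) (hx3 : x 3 = -x 2) :
    gravField m x 2 = antipodalPairsField (m 2) (m 0) (x 2) (x 0) := by
  have others : univ.erase (2 : Fin 4) = {3, 0, 1} := by decide
  simp [gravField, antipodalPairsField, others, hm1, hm3, hx1, hx3]

lemma newton_iff_of_antipodal {x : Fin 4 → ℝ → E} {t : ℝ} (hm1 : m 1 = m 0) (hm3 : m 3 = m 2)
    (hx1 : x 1 =ᶠ[𝓝 t] -x 0) (hx3 : x 3 =ᶠ[𝓝 t] -x 2) :
    (∀ i, deriv (deriv (x i)) t = gravField m (x · t) i) ↔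
      deriv (deriv (x 0)) t = antipodalPairsField (m 0) (m 2) (x 0 t) (x 2 t) ∧
        deriv (deriv (x 2)) t = antipodalPairsField (m 2) (m 0) (x 2 t) (x 0 t) := by
  let σ : Equiv.Perm (Fin 4) := Equiv.swap 0 1 * Equiv.swap 2 3
  have hm : ∀ i, m (σ i) = m i := by
    intro i
    fin_cases i
    exacts [hm1, hm1.symm, hm3, hm3.symm]
  have hx1_symm : x 0 =ᶠ[𝓝 t] -x 1 := by simpa using hx1.symm.neg
  have hx3_symm : x 2 =ᶠ[𝓝 t] -x 3 := by simpa using hx3.symm.neg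
  have hx : ∀ i, x (σ i) =ᶠ[𝓝 t] -x i := by
    intro i
    fin_cases i
    exacts [hx1, hx1_symm, hx3, hx3_symm]
  rw [← gravField_zero_of_antipodal (x := (x · t)) hm1 hm3 hx1.eq_of_nhds hx3.eq_of_nhds,
    ← gravField_two_of_antipodal (x := (x · t)) hm1 hm3 hx1.eq_of_nhds hx3.eq_of_nhds]
  refine ⟨fun newton ↦ ⟨newton 0, newton 2⟩, fun ⟨newton_zero, newton_two⟩ i ↦ ?_⟩
  have newton_one := (newton_perm_iff_of_eventuallyEq_neg σ hm hx 0).2 newton_zero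
  have newton_three := (newton_perm_iff_of_eventuallyEq_neg σ hm hx 2).2 newton_two
  fin_cases i
  exacts [newton_zero, newton_one, newton_two, newton_three]

end TwoAntipodalPairs

end NewtonianGravity

section PolarFrame

/-- The unit vector of the plane with polar angle `φ`. The polar frame at angle `φ` consists of
`unitVec φ` and `unitVec (φ + π / 2)`. -/
noncomputable def unitVec (φ : ℝ) : EuclideanSpace ℝ (Fin 2) :=
  vec2 (cos φ) (sin φ)

lemma vec2_mul_cos_mul_sin (r φ : ℝ) : vec2 (r * cos φ) (r * sin φ) = r • unitVec φ := by
  ext i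
  fin_cases i <;> simp [vec2, unitVec]

lemma inner_unitVec (φ ψ : ℝ) : inner ℝ (unitVec φ) (unitVec ψ) = cos (ψ - φ) := by
  simp [unitVec, vec2, PiLp.inner_apply, Fin.sum_univ_two, cos_sub]

lemma norm_unitVec (φ : ℝ) : ‖unitVec φ‖ = 1 := by
  simp [unitVec, vec2, EuclideanSpace.norm_eq, Fin.sum_univ_two]

lemma unitVec_add_pi (φ : ℝ) : unitVec (φ + π) = -unitVec φ := by
  ext i
  fin_cases i <;> simp [vec2, unitVec]

lemma unitVec_eq_cos_smul_add_sin_smul (φ ψ : ℝ) :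
    unitVec ψ = cos (ψ - φ) • unitVec φ + sin (ψ - φ) • unitVec (φ + π / 2) := by
  obtain ⟨α, rfl⟩ : ∃ α, ψ = φ + α := ⟨ψ - φ, by ring⟩
  ext i
  fin_cases i
  · change cos (φ + α) = cos (φ + α - φ) * cos φ + sin (φ + α - φ) * cos (φ + π / 2)
    rw [add_sub_cancel_left, cos_add, cos_add_pi_div_two]
    ring
  · change sin (φ + α) = cos (φ + α - φ) * sin φ + sin (φ + α - φ) * sin (φ + π / 2)
    rw [add_sub_cancel_left, sin_add, sin_add_pi_div_two]
    ring

lemma hasDerivAt_unitVec (φ : ℝ) : HasDerivAt unitVec (unitVec (φ + π / 2)) φ := by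
  have fixed_frame (ψ : ℝ) : unitVec ψ = cos ψ • unitVec 0 + sin ψ • unitVec (π / 2) := by
    simpa using unitVec_eq_cos_smul_add_sin_smul 0 ψ
  have h := ((hasDerivAt_cos φ).smul_const (unitVec 0)).add
    ((hasDerivAt_sin φ).smul_const (unitVec (π / 2)))
  refine (h.congr_of_eventuallyEq (.of_forall fixed_frame)).congr_deriv ?_
  rw [fixed_frame (φ + π / 2), cos_add_pi_div_two, sin_add_pi_div_two]

lemma smul_unitVec_add_smul_inj {φ a b c d : ℝ} :
    a • unitVec φ + b • unitVec (φ + π / 2) = c • unitVec φ + d • unitVec (φ + π / 2) ↔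
      a = c ∧ b = d := by
  refine ⟨fun h ↦ ⟨?_, ?_⟩, fun ⟨hac, hbd⟩ ↦ by rw [hac, hbd]⟩
  · have radial := congrArg (inner ℝ (unitVec φ)) h
    simpa only [inner_add_right, inner_smul_right, inner_unitVec, sub_self, cos_zero,
      add_sub_cancel_left, cos_pi_div_two, mul_one, mul_zero, add_zero] using radial
  · have transverse := congrArg (inner ℝ (unitVec (φ + π / 2))) h
    simpa only [inner_add_right, inner_smul_right, inner_unitVec, sub_self, cos_zero,
      sub_add_cancel_left, cos_neg, cos_pi_div_two, mul_one, mul_zero, zero_add] using transverse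

lemma norm_smul_unitVec_sub_smul_unitVec (r R φ ψ : ℝ) :
    ‖R • unitVec ψ - r • unitVec φ‖ = √(r ^ 2 + R ^ 2 - 2 * r * R * cos (ψ - φ)) := by
  rw [← sqrt_sq (norm_nonneg _), norm_sub_sq_real, inner_smul_left, inner_smul_right,
    real_inner_comm, inner_unitVec, norm_smul, norm_smul, norm_unitVec, norm_unitVec]
  congr 1
  simp only [norm_eq_abs, mul_one, sq_abs, conj_trivial]
  ring

end PolarFrame

section TwiceDifferentiable

variable {f : ℝ → ℝ} {t : ℝ}

/-- Twice differentiability of a real function at a point. Differentiability is required near `t`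
because `deriv f` takes the junk value `0` where `f` is not differentiable. -/
def TwiceDifferentiableAt (f : ℝ → ℝ) (t : ℝ) : Prop :=
  (∀ᶠ s in 𝓝 t, DifferentiableAt ℝ f s) ∧ DifferentiableAt ℝ (deriv f) t

lemma TwiceDifferentiableAt.of_differentiableOn {s : Set ℝ} (hf : DifferentiableOn ℝ f s)
    (hf' : DifferentiableOn ℝ (deriv f) s) (hs : s ∈ 𝓝 t) : TwiceDifferentiableAt f t :=
  ⟨hf.eventually_differentiableAt hs, hf'.differentiableAt hs⟩

lemma TwiceDifferentiableAt.add_const (hf : TwiceDifferentiableAt f t) (c : ℝ) :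
    TwiceDifferentiableAt (fun s ↦ f s + c) t :=
  ⟨hf.1.mono fun _ hs ↦ hs.add_const c, by simpa only [deriv_add_const'] using hf.2⟩

end TwiceDifferentiable

section PolarMotion

variable {r φ : ℝ → ℝ} {t : ℝ}

lemma hasDerivAt_polar {r' φ' : ℝ} (hr : HasDerivAt r r' t) (hφ : HasDerivAt φ φ' t) :
    HasDerivAt (fun s ↦ r s • unitVec (φ s))
      (r' • unitVec (φ t) + (r t * φ') • unitVec (φ t + π / 2)) t := by
  refine (hr.fun_smul ((hasDerivAt_unitVec (φ t)).scomp t hφ)).congr_deriv ?_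
  simp only [Function.comp_apply]
  module

lemma deriv_deriv_polar (hr : TwiceDifferentiableAt r t) (hφ : TwiceDifferentiableAt φ t) :
    deriv (deriv fun s ↦ r s • unitVec (φ s)) t =
      (deriv (deriv r) t - r t * deriv φ t ^ 2) • unitVec (φ t) +
        (r t * deriv (deriv φ) t + 2 * deriv r t * deriv φ t) • unitVec (φ t + π / 2) := by
  have velocity : deriv (fun s ↦ r s • unitVec (φ s)) =ᶠ[𝓝 t] fun s ↦
      deriv r s • unitVec (φ s) + (r s * deriv φ s) • unitVec (φ s + π / 2) := by
    filter_upwards [hr.1, hφ.1] with s hrs hφs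
    exact (hasDerivAt_polar hrs.hasDerivAt hφs.hasDerivAt).deriv
  have hφt := hφ.1.self_of_nhds.hasDerivAt
  have radial := hasDerivAt_polar hr.2.hasDerivAt hφt
  have transverse := hasDerivAt_polar (hr.1.self_of_nhds.hasDerivAt.mul hφ.2.hasDerivAt)
    (hφt.add_const (π / 2))
  have quarter_turn_twice : unitVec (φ t + π / 2 + π / 2) = -unitVec (φ t) := by
    rw [add_assoc, add_halves, unitVec_add_pi]
  rw [velocity.deriv_eq]
  refine (radial.add transverse).deriv.trans ?_
  rw [quarter_turn_twice]
  simp only [Pi.mul_apply]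
  module

lemma deriv_deriv_polar_eq_iff (hrt : r t ≠ 0) (hr : TwiceDifferentiableAt r t)
    (hφ : TwiceDifferentiableAt φ t) {a b : ℝ} :
    deriv (deriv fun s ↦ r s • unitVec (φ s)) t =
        a • unitVec (φ t) + b • unitVec (φ t + π / 2) ↔
      deriv (deriv r) t = r t * deriv φ t ^ 2 + a ∧
        deriv (deriv φ) t = (b - 2 * deriv r t * deriv φ t) / r t := by
  rw [deriv_deriv_polar hr hφ, smul_unitVec_add_smul_inj, sub_eq_iff_eq_add',
    eq_div_iff hrt, eq_sub_iff_add_eq, mul_comm (r t) (deriv (deriv φ) t)]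

end PolarMotion

section PolarForce

lemma gravAttraction_polar (μ r R φ ψ : ℝ) :
    gravAttraction μ (R • unitVec ψ) (r • unitVec φ) =
      (μ * ((R * cos (ψ - φ) - r) / √(r ^ 2 + R ^ 2 - 2 * r * R * cos (ψ - φ)) ^ 3)) •
          unitVec φ +
        (μ * R * sin (ψ - φ) * (1 / √(r ^ 2 + R ^ 2 - 2 * r * R * cos (ψ - φ)) ^ 3)) •
          unitVec (φ + π / 2) := by
  rw [gravAttraction, norm_smul_unitVec_sub_smul_unitVec, unitVec_eq_cos_smul_add_sin_smul φ ψ]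
  module

lemma gravAttraction_polar_neg_self (μ φ : ℝ) {r : ℝ} (hr : 0 < r) :
    gravAttraction μ (-(r • unitVec φ)) (r • unitVec φ) = -(μ / (4 * r ^ 2)) • unitVec φ := by
  rw [gravAttraction_neg_self, norm_smul, norm_unitVec, norm_of_nonneg hr.le, smul_smul]
  congr 1
  field_simp

lemma antipodalPairsField_polar (μ ν R φ ψ : ℝ) {r : ℝ} (hr : 0 < r) {d₁ d₂ : ℝ}
    (hd₁ : d₁ = √(r ^ 2 + R ^ 2 - 2 * r * R * cos (ψ - φ)))
    (hd₂ : d₂ = √(r ^ 2 + R ^ 2 + 2 * r * R * cos (ψ - φ))) :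
    antipodalPairsField μ ν (r • unitVec φ) (R • unitVec ψ) =
      (-(μ / (4 * r ^ 2)) +
          ν * ((R * cos (ψ - φ) - r) / d₁ ^ 3 + (-(R * cos (ψ - φ)) - r) / d₂ ^ 3)) •
          unitVec φ +
        (ν * R * sin (ψ - φ) * (1 / d₁ ^ 3 - 1 / d₂ ^ 3)) • unitVec (φ + π / 2) := by
  have opposite : r ^ 2 + (-R) ^ 2 - 2 * r * -R * cos (ψ - φ) =
      r ^ 2 + R ^ 2 + 2 * r * R * cos (ψ - φ) := by ring
  rw [antipodalPairsField, gravAttraction_polar_neg_self μ φ hr, ← neg_smul R,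
    gravAttraction_polar, gravAttraction_polar, opposite, ← hd₁, ← hd₂]
  module

end PolarForce

section ReducedSystem

lemma newton_polar_iff_of_antipodal {x : ℝ → EuclideanSpace ℝ (Fin 2)} {r φ : ℝ → ℝ} {t : ℝ}
    (hx : x =ᶠ[𝓝 t] fun s ↦ r s • unitVec (φ s)) (hrt : 0 < r t)
    (hr : TwiceDifferentiableAt r t) (hφ : TwiceDifferentiableAt φ t) (μ ν R ψ : ℝ) {d₁ d₂ : ℝ}
    (hd₁ : d₁ = √(r t ^ 2 + R ^ 2 - 2 * r t * R * cos (ψ - φ t)))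
    (hd₂ : d₂ = √(r t ^ 2 + R ^ 2 + 2 * r t * R * cos (ψ - φ t))) :
    deriv (deriv x) t = antipodalPairsField μ ν (r t • unitVec (φ t)) (R • unitVec ψ) ↔
      deriv (deriv r) t = r t * deriv φ t ^ 2 - μ / (4 * r t ^ 2) +
          ν * ((R * cos (ψ - φ t) - r t) / d₁ ^ 3 + (-(R * cos (ψ - φ t)) - r t) / d₂ ^ 3) ∧
        deriv (deriv φ) t =
          (ν * R * sin (ψ - φ t) * (1 / d₁ ^ 3 - 1 / d₂ ^ 3) - 2 * deriv r t * deriv φ t) /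
            r t := by
  rw [hx.deriv.deriv_eq, antipodalPairsField_polar μ ν R (φ t) ψ hrt hd₁ hd₂,
    deriv_deriv_polar_eq_iff hrt.ne' hr hφ, ← add_assoc, ← sub_eq_add_neg]

lemma newton_iff_polar_system_of_antipodal {m : Fin 4 → ℝ}
    {x : Fin 4 → ℝ → EuclideanSpace ℝ (Fin 2)} {r₁ r₂ φ ψ : ℝ → ℝ} {t : ℝ}
    (hm1 : m 1 = m 0) (hm3 : m 3 = m 2)
    (hx0 : x 0 =ᶠ[𝓝 t] fun s ↦ r₁ s • unitVec (φ s)) (hx1 : x 1 =ᶠ[𝓝 t] -x 0)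
    (hx2 : x 2 =ᶠ[𝓝 t] fun s ↦ r₂ s • unitVec (ψ s)) (hx3 : x 3 =ᶠ[𝓝 t] -x 2)
    (hr₁t : 0 < r₁ t) (hr₂t : 0 < r₂ t)
    (hr₁ : TwiceDifferentiableAt r₁ t) (hr₂ : TwiceDifferentiableAt r₂ t)
    (hφ : TwiceDifferentiableAt φ t) (hψ : TwiceDifferentiableAt ψ t) {d₁ d₂ : ℝ}
    (hd₁ : d₁ = √(r₁ t ^ 2 + r₂ t ^ 2 - 2 * r₁ t * r₂ t * cos (ψ t - φ t)))
    (hd₂ : d₂ = √(r₁ t ^ 2 + r₂ t ^ 2 + 2 * r₁ t * r₂ t * cos (ψ t - φ t))) :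
    (∀ i, deriv (deriv (x i)) t = gravField m (x · t) i) ↔
      deriv (deriv r₁) t = r₁ t * deriv φ t ^ 2 - m 0 / (4 * r₁ t ^ 2) +
          m 2 * ((r₂ t * cos (ψ t - φ t) - r₁ t) / d₁ ^ 3 +
            (-(r₂ t * cos (ψ t - φ t)) - r₁ t) / d₂ ^ 3) ∧
        deriv (deriv φ) t =
          (m 2 * r₂ t * sin (ψ t - φ t) * (1 / d₁ ^ 3 - 1 / d₂ ^ 3) -
            2 * deriv r₁ t * deriv φ t) / r₁ t ∧
        deriv (deriv r₂) t = r₂ t * deriv ψ t ^ 2 - m 2 / (4 * r₂ t ^ 2) +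
          m 0 * ((r₁ t * cos (ψ t - φ t) - r₂ t) / d₁ ^ 3 +
            (-(r₁ t * cos (ψ t - φ t)) - r₂ t) / d₂ ^ 3) ∧
        deriv (deriv ψ) t =
          (m 0 * r₁ t * sin (ψ t - φ t) * (1 / d₂ ^ 3 - 1 / d₁ ^ 3) -
            2 * deriv r₂ t * deriv ψ t) / r₂ t := by
  have cos_symm : cos (φ t - ψ t) = cos (ψ t - φ t) := by rw [← cos_neg, neg_sub]
  have sin_antisymm : sin (φ t - ψ t) = -sin (ψ t - φ t) := by rw [← sin_neg, neg_sub]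
  have hd₁' : d₁ = √(r₂ t ^ 2 + r₁ t ^ 2 - 2 * r₂ t * r₁ t * cos (φ t - ψ t)) := by
    rw [hd₁, cos_symm, add_comm, mul_right_comm 2]
  have hd₂' : d₂ = √(r₂ t ^ 2 + r₁ t ^ 2 + 2 * r₂ t * r₁ t * cos (φ t - ψ t)) := by
    rw [hd₂, cos_symm, add_comm (r₁ t ^ 2), mul_right_comm 2]
  have transverse_sign : m 0 * r₁ t * -sin (ψ t - φ t) * (1 / d₁ ^ 3 - 1 / d₂ ^ 3) =
      m 0 * r₁ t * sin (ψ t - φ t) * (1 / d₂ ^ 3 - 1 / d₁ ^ 3) := by ring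
  rw [newton_iff_of_antipodal hm1 hm3 hx1 hx3, hx0.eq_of_nhds, hx2.eq_of_nhds,
    newton_polar_iff_of_antipodal hx0 hr₁t hr₁ hφ (m 0) (m 2) (r₂ t) (ψ t) hd₁ hd₂,
    newton_polar_iff_of_antipodal hx2 hr₂t hr₂ hψ (m 2) (m 0) (r₁ t) (φ t) hd₁' hd₂',
    cos_symm, sin_antisymm, transverse_sign, and_assoc]

theorem four_body_reduced_system_general
    {I : Set ℝ} (hI : IsOpen I) {r1 r2 θ β : ℝ → ℝ}
    (hr1pos : ∀ t ∈ I, 0 < r1 t) (hr2pos : ∀ t ∈ I, 0 < r2 t)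
    (hr1d : DifferentiableOn ℝ r1 I) (hr1d2 : DifferentiableOn ℝ (deriv r1) I)
    (hr2d : DifferentiableOn ℝ r2 I) (hr2d2 : DifferentiableOn ℝ (deriv r2) I)
    (hθd : DifferentiableOn ℝ θ I) (hθd2 : DifferentiableOn ℝ (deriv θ) I)
    (hβd : DifferentiableOn ℝ β I) (hβd2 : DifferentiableOn ℝ (deriv β) I)
    {δ d1 d2 : ℝ → ℝ} (hδ : ∀ t ∈ I, δ t = θ t - β t)
    (hd1 : ∀ t ∈ I, d1 t = √(r1 t ^ 2 + r2 t ^ 2 - 2 * r1 t * r2 t * sin (δ t)))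
    (hd2 : ∀ t ∈ I, d2 t = √(r1 t ^ 2 + r2 t ^ 2 + 2 * r1 t * r2 t * sin (δ t)))
    (hd1pos : ∀ t ∈ I, 0 < d1 t) (hd2pos : ∀ t ∈ I, 0 < d2 t)
    {m : Fin 4 → ℝ} (hm1 : m 1 = m 0) (hm3 : m 3 = m 2)
    {bodies : Fin 4 → ℝ → EuclideanSpace ℝ (Fin 2)}
    (hb0 : ∀ t ∈ I, bodies 0 t = vec2 (r1 t * cos (θ t)) (r1 t * sin (θ t)))
    (hb1 : ∀ t ∈ I, bodies 1 t = -bodies 0 t)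
    (hb2 : ∀ t ∈ I, bodies 2 t = vec2 (r2 t * cos (β t + π / 2)) (r2 t * sin (β t + π / 2)))
    (hb3 : ∀ t ∈ I, bodies 3 t = -bodies 2 t) :
    (∀ i, ∀ t ∈ I, deriv (deriv (bodies i)) t = gravField m (bodies · t) i) ↔
      ∀ t ∈ I,
        deriv (deriv r1) t = r1 t * deriv θ t ^ 2 - m 0 / (4 * r1 t ^ 2) +
            m 2 * ((r2 t * sin (δ t) - r1 t) / d1 t ^ 3 +
              (-(r2 t * sin (δ t)) - r1 t) / d2 t ^ 3) ∧
        deriv (deriv θ) t =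
          (m 2 * r2 t * cos (δ t) * (1 / d1 t ^ 3 - 1 / d2 t ^ 3) -
            2 * deriv r1 t * deriv θ t) / r1 t ∧
        deriv (deriv r2) t = r2 t * deriv β t ^ 2 - m 2 / (4 * r2 t ^ 2) +
            m 0 * ((r1 t * sin (δ t) - r2 t) / d1 t ^ 3 +
              (-(r1 t * sin (δ t)) - r2 t) / d2 t ^ 3) ∧
        deriv (deriv β) t =
          (m 0 * r1 t * cos (δ t) * (1 / d2 t ^ 3 - 1 / d1 t ^ 3) -
            2 * deriv r2 t * deriv β t) / r2 t := by
  refine (forall_comm.trans (forall_congr' fun _ ↦ forall_comm)).trans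
    (forall₂_congr fun t ht ↦ ?_)
  have near : I ∈ 𝓝 t := hI.mem_nhds ht
  have hx0 : bodies 0 =ᶠ[𝓝 t] fun s ↦ r1 s • unitVec (θ s) :=
    eventually_of_mem near fun s hs ↦ by rw [hb0 s hs, vec2_mul_cos_mul_sin]
  have hx2 : bodies 2 =ᶠ[𝓝 t] fun s ↦ r2 s • unitVec (β s + π / 2) :=
    eventually_of_mem near fun s hs ↦ by rw [hb2 s hs, vec2_mul_cos_mul_sin]
  have angle : β t + π / 2 - θ t = π / 2 - δ t := by rw [hδ t ht]; ring
  have polar_system := newton_iff_polar_system_of_antipodal hm1 hm3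
    hx0 (eventually_of_mem near hb1) hx2 (eventually_of_mem near hb3) (hr1pos t ht) (hr2pos t ht)
    (.of_differentiableOn hr1d hr1d2 near) (.of_differentiableOn hr2d hr2d2 near)
    (.of_differentiableOn hθd hθd2 near)
    ((TwiceDifferentiableAt.of_differentiableOn hβd hβd2 near).add_const (π / 2))
    (d₁ := d1 t) (d₂ := d2 t)
    (by rw [angle, cos_pi_div_two_sub, hd1 t ht]) (by rw [angle, cos_pi_div_two_sub, hd2 t ht])
  rwa [angle, cos_pi_div_two_sub, sin_pi_div_two_sub, deriv_add_const'] at polar_system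

end ReducedSystem

/-- Proposition: under the two-pair 4-body ansatz, Newton's equations of the
4-body problem are equivalent to the reduced system for `r1, θ, r2, β`. -/
theorem four_body_reduced_system
    (m2 : ℝ) (hm2 : 0 < m2)
    (r1 r2 θ β : ℝ → ℝ)
    (hr1pos : ∀ t, 0 < r1 t) (hr2pos : ∀ t, 0 < r2 t)
    (hr1d : Differentiable ℝ r1) (hr1d2 : Differentiable ℝ (deriv r1))
    (hr2d : Differentiable ℝ r2) (hr2d2 : Differentiable ℝ (deriv r2))
    (hθd : Differentiable ℝ θ) (hθd2 : Differentiable ℝ (deriv θ))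
    (hβd : Differentiable ℝ β) (hβd2 : Differentiable ℝ (deriv β))
    (δ d1 d2 : ℝ → ℝ)
    (hδ : ∀ t, δ t = θ t - β t)
    (hd1 : ∀ t, d1 t = Real.sqrt ((r1 t)^2 + (r2 t)^2 - 2 * r1 t * r2 t * Real.sin (δ t)))
    (hd2 : ∀ t, d2 t = Real.sqrt ((r1 t)^2 + (r2 t)^2 + 2 * r1 t * r2 t * Real.sin (δ t)))
    (hd1pos : ∀ t, 0 < d1 t) (hd2pos : ∀ t, 0 < d2 t)
    (m : Fin 4 → ℝ)
    (hm0 : m 0 = 1) (hm1 : m 1 = 1) (hm2' : m 2 = m2) (hm3 : m 3 = m2)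
    (bodies : Fin 4 → ℝ → EuclideanSpace ℝ (Fin 2))
    (hb0 : ∀ t, bodies 0 t = vec2 (r1 t * Real.cos (θ t)) (r1 t * Real.sin (θ t)))
    (hb1 : ∀ t, bodies 1 t = -(bodies 0 t))
    (hb2 : ∀ t, bodies 2 t =
      vec2 (r2 t * Real.cos (β t + π/2)) (r2 t * Real.sin (β t + π/2)))
    (hb3 : ∀ t, bodies 3 t = -(bodies 2 t)) :
    (∀ (i : Fin 4) (t : ℝ),
        deriv (deriv (bodies i)) t =
          ∑ j ∈ Finset.univ.erase i,
            (m j / ‖bodies j t - bodies i t‖ ^ 3) • (bodies j t - bodies i t))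
    ↔
    (∀ t : ℝ,
      deriv (deriv r1) t =
          r1 t * (deriv θ t)^2 - 1 / (4 * (r1 t)^2)
          + m2 * ((r2 t * Real.sin (δ t) - r1 t) / (d1 t)^3
                + (-(r2 t * Real.sin (δ t)) - r1 t) / (d2 t)^3)
      ∧ deriv (deriv θ) t =
          (m2 * r2 t * Real.cos (δ t) * (1/(d1 t)^3 - 1/(d2 t)^3)
            - 2 * deriv r1 t * deriv θ t) / r1 t
      ∧ deriv (deriv r2) t =
          r2 t * (deriv β t)^2 - m2 / (4 * (r2 t)^2)
          + ((r1 t * Real.sin (δ t) - r2 t) / (d1 t)^3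
            + (-(r1 t * Real.sin (δ t)) - r2 t) / (d2 t)^3)
      ∧ deriv (deriv β) t =
          (r1 t * Real.cos (δ t) * (1/(d2 t)^3 - 1/(d1 t)^3)
            - 2 * deriv r2 t * deriv β t) / r2 t) := by
  simpa [hm0, hm2', gravField, gravAttraction] using
    four_body_reduced_system_general isOpen_univ (fun t _ ↦ hr1pos t) (fun t _ ↦ hr2pos t)
      hr1d.differentiableOn hr1d2.differentiableOn hr2d.differentiableOn hr2d2.differentiableOn
      hθd.differentiableOn hθd2.differentiableOn hβd.differentiableOn hβd2.differentiableOn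
      (fun t _ ↦ hδ t) (fun t _ ↦ hd1 t) (fun t _ ↦ hd2 t) (fun t _ ↦ hd1pos t)
      (fun t _ ↦ hd2pos t) (hm1.trans hm0.symm) (hm3.trans hm2'.symm)
      (fun t _ ↦ hb0 t) (fun t _ ↦ hb1 t) (fun t _ ↦ hb2 t) (fun t _ ↦ hb3 t)
end

section
/- Assume six planar bodies move according to the stated two-triangle ansatz with masses 1, 1, 1, m2, m2, m2 and G = 1. Then the six bodies satisfy Newton's equations of the 6-body problem, r⃗̈_i = Σ_{j≠i} m_j (r⃗_j − r⃗_i)/‖r⃗_j − r⃗_i‖³, if and only if the functions r1, θ, r2, β satisfy the system: θ̈ = (m2 B1 − 2 ṙ1 θ̇)/r1, r̈1 = r1 θ̇² − 1/(√3 r1²) + m2 A1, β̈ = (B2 − 2 ṙ2 β̇)/r2, and r̈2 = r2 β̇² + A2 − m2/(√3 r2²). -/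
open Real

/-
A character `χ` of a finite abelian group `G` lets `G` act on the plane by rotations, and if the
bodies form orbits `χ g * c a` of this action with constant mass along each orbit, then Newton's
equation for the body `(a, g)` is the equation for `(a, 0)` rotated by `χ g`. One equation
per orbit is left; for `c a = r a * exp (θ a * I)`, dividing by `exp (θ a * I)` splits it into a
radial and a tangential part whose right-hand sides depend only on the radii and the differences of
the angles. The two triangles are the orbits of `ZMod 3` through `r1 * exp (θ * I)` and
`r2 * exp ((β + π / 3) * I)`.
-/

open scoped ComplexConjugate

section NBody

variable {ι κ E F : Type*} [NormedAddCommGroup E] [NormedSpace ℝ E]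
  [NormedAddCommGroup F] [NormedSpace ℝ F]

/-- The Newtonian acceleration towards a unit mass at displacement `v`, with gravitational
constant `1`. Its value at `v = 0` is `0`. -/
noncomputable def attraction (v : E) : E := (‖v‖ ^ 3)⁻¹ • v

@[simp]
lemma attraction_zero : attraction (0 : E) = 0 := smul_zero _

lemma attraction_map {𝓕 : Type*} [FunLike 𝓕 E F] [LinearIsometryClass 𝓕 ℝ E F] (L : 𝓕)
    (v : E) : attraction (L v) = L (attraction v) := by
  simp [attraction]

/-- The motion `x` of bodies with masses `m` solves Newton's equations. Since `attraction 0 = 0`,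
the sum may include the body itself. -/
def IsNBodySolution [Fintype ι] (m : ι → ℝ) (x : ι → ℝ → E) : Prop :=
  ∀ i t, deriv (deriv (x i)) t = ∑ j, m j • attraction (x j t - x i t)

lemma isNBodySolution_iff_sum_erase [Fintype ι] [DecidableEq ι] {m : ι → ℝ} {x : ι → ℝ → E} :
    IsNBodySolution m x ↔ ∀ i t, deriv (deriv (x i)) t =
      ∑ j ∈ Finset.univ.erase i, (m j / ‖x j t - x i t‖ ^ 3) • (x j t - x i t) := by
  refine forall₂_congr fun i t => ?_
  rw [Finset.sum_erase _ (by simp)]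
  simp only [attraction, smul_smul, div_eq_mul_inv]

lemma isNBodySolution_comp_equiv [Fintype ι] [Fintype κ] {m : ι → ℝ} {x : ι → ℝ → E}
    (e : κ ≃ ι) : IsNBodySolution (m ∘ e) (x ∘ e) ↔ IsNBodySolution m x := by
  rw [IsNBodySolution, IsNBodySolution, ← e.forall_congr_right]
  simp only [Function.comp_apply, ← e.sum_comp (fun j => m j • attraction (x j _ - _))]

lemma deriv_linearIsometryEquiv_comp (L : E ≃ₗᵢ[ℝ] F) (f : ℝ → E) :
    deriv (fun t => L (f t)) = fun t => L (deriv f t) := by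
  funext t
  have h := L.comp_fderiv (f := f) (x := t)
  rw [← fderiv_apply_one_eq_deriv, ← fderiv_apply_one_eq_deriv]
  exact congr($h 1)

lemma isNBodySolution_linearIsometryEquiv_comp [Fintype ι] {m : ι → ℝ} {x : ι → ℝ → E}
    (L : E ≃ₗᵢ[ℝ] F) : IsNBodySolution m (fun i t => L (x i t)) ↔ IsNBodySolution m x := by
  simp only [IsNBodySolution, deriv_linearIsometryEquiv_comp, ← map_sub,
    attraction_map, ← map_smul, ← map_sum, L.injective.eq_iff]

end NBody

section Orbit

variable {ι G : Type*} [AddCommGroup G] [Fintype G] {χ : AddChar G ℂ}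

lemma attraction_mul {u : ℂ} (hu : ‖u‖ = 1) (v : ℂ) : attraction (u * v) = u * attraction v := by
  simp [attraction, hu, mul_left_comm]

lemma attraction_conj (v : ℂ) : attraction (conj v) = conj (attraction v) :=
  attraction_map Complex.conjLIE v

/-- The acceleration at `z` caused by unit masses at the points `χ g * w` of the orbit of `w`
under the rotations `χ g`. -/
noncomputable def orbitPull (χ : AddChar G ℂ) (z w : ℂ) : ℂ := ∑ g, attraction (χ g * w - z)

lemma orbitPull_mul_mul {u : ℂ} (hu : ‖u‖ = 1) (z w : ℂ) :
    orbitPull χ (u * z) (u * w) = u * orbitPull χ z w := by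
  simp only [orbitPull, mul_left_comm _ u, ← mul_sub, attraction_mul hu, Finset.mul_sum]

lemma orbitPull_mul_left (g : G) (z w : ℂ) :
    orbitPull χ (χ g * z) w = χ g * orbitPull χ z w := by
  rw [orbitPull, ← Equiv.sum_comp (Equiv.addLeft g)]
  simp only [Equiv.coe_addLeft, AddChar.map_add_eq_mul, mul_assoc, ← mul_sub,
    attraction_mul (χ.norm_apply g), ← Finset.mul_sum, orbitPull]

lemma orbitPull_conj_conj (z w : ℂ) :
    orbitPull χ (conj z) (conj w) = conj (orbitPull χ z w) := by
  rw [orbitPull, ← Equiv.sum_comp (Equiv.neg G)]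
  simp only [Equiv.neg_apply, AddChar.map_neg_eq_conj, ← map_mul, ← map_sub, attraction_conj,
    ← map_sum, orbitPull]

theorem isNBodySolution_orbits_iff [Fintype ι] {m : ι → ℝ} {c : ι → ℝ → ℂ} :
    IsNBodySolution (fun p : ι × G => m p.1) (fun p t => χ p.2 * c p.1 t) ↔
      ∀ a t, deriv (deriv (c a)) t = ∑ b, m b • orbitPull χ (c a t) (c b t) := by
  have pull (a : ι) (g : G) (t : ℝ) :
      ∑ p : ι × G, m p.1 • attraction (χ p.2 * c p.1 t - χ g * c a t) =
        χ g * ∑ b, m b • orbitPull χ (c a t) (c b t) := by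
    simp only [Fintype.sum_prod_type, ← Finset.smul_sum, Finset.mul_sum, mul_smul_comm,
      ← orbitPull_mul_left]
    rfl
  have hχ (g : G) : χ g ≠ 0 := norm_ne_zero_iff.mp (by simp [χ.norm_apply])
  simp only [IsNBodySolution, Prod.forall, pull, deriv_const_mul_field', mul_right_inj' (hχ _),
    forall_const]

end Orbit

section Polar

variable {ι G : Type*} [AddCommGroup G] [Fintype G] {χ : AddChar G ℂ}

lemma deriv_deriv_polar_s1 {r θ : ℝ → ℝ} (hr : Differentiable ℝ r) (hr' : Differentiable ℝ (deriv r))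
    (hθ : Differentiable ℝ θ) (hθ' : Differentiable ℝ (deriv θ)) (t : ℝ) :
    deriv (deriv fun t => r t * Complex.exp (θ t * Complex.I)) t =
      Complex.exp (θ t * Complex.I) * ⟨deriv (deriv r) t - r t * deriv θ t ^ 2,
        r t * deriv (deriv θ) t + 2 * deriv r t * deriv θ t⟩ := by
  have hexp (s : ℝ) : HasDerivAt (fun t => Complex.exp (θ t * Complex.I))
      (Complex.exp (θ s * Complex.I) * (deriv θ s * Complex.I)) s :=
    ((hθ s).hasDerivAt.ofReal_comp.mul_const _).cexp
  have velocity : deriv (fun t => r t * Complex.exp (θ t * Complex.I)) = fun t =>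
      Complex.exp (θ t * Complex.I) * (deriv r t + r t * deriv θ t * Complex.I) := by
    funext s
    refine ((hr s).hasDerivAt.ofReal_comp.mul (hexp s)).deriv.trans ?_
    ring
  rw [velocity]
  refine ((hexp t).mul ((hr' t).hasDerivAt.ofReal_comp.add (((hr t).hasDerivAt.ofReal_comp.mul
    (hθ' t).hasDerivAt.ofReal_comp).mul_const Complex.I))).deriv.trans ?_
  simp only [Complex.mk_eq_add_mul_I, Pi.add_apply, Pi.mul_apply]
  push_cast
  linear_combination Complex.exp (θ t * Complex.I) * r t * deriv θ t ^ 2 * Complex.I_sq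

lemma orbitPull_polar (r ρ θ φ : ℝ) :
    orbitPull χ (r * Complex.exp (θ * Complex.I)) (ρ * Complex.exp (φ * Complex.I)) =
      Complex.exp (θ * Complex.I) *
        orbitPull χ r (ρ * Complex.exp ((φ - θ : ℝ) * Complex.I)) := by
  rw [← orbitPull_mul_mul (Complex.norm_exp_ofReal_mul_I θ), mul_left_comm, ← Complex.exp_add]
  push_cast
  ring_nf

lemma orbitPull_polar_neg (r ρ α : ℝ) :
    orbitPull χ r (ρ * Complex.exp ((-α : ℝ) * Complex.I)) =
      conj (orbitPull χ r (ρ * Complex.exp (α * Complex.I))) := by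
  rw [← orbitPull_conj_conj]
  simp [← Complex.exp_conj]

theorem isNBodySolution_polar_orbits_iff [Fintype ι] {m : ι → ℝ} {r θ : ι → ℝ → ℝ}
    (hr₀ : ∀ a t, r a t ≠ 0)
    (hr : ∀ a, Differentiable ℝ (r a)) (hr' : ∀ a, Differentiable ℝ (deriv (r a)))
    (hθ : ∀ a, Differentiable ℝ (θ a)) (hθ' : ∀ a, Differentiable ℝ (deriv (θ a))) :
    IsNBodySolution (fun p : ι × G => m p.1)
        (fun p t => χ p.2 * (r p.1 t * Complex.exp (θ p.1 t * Complex.I))) ↔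
      ∀ a t,
        deriv (deriv (θ a)) t = (∑ b, m b * (orbitPull χ (r a t)
          (r b t * Complex.exp ((θ b t - θ a t : ℝ) * Complex.I))).im
            - 2 * deriv (r a) t * deriv (θ a) t) / r a t ∧
        deriv (deriv (r a)) t = r a t * deriv (θ a) t ^ 2 + ∑ b, m b * (orbitPull χ (r a t)
          (r b t * Complex.exp ((θ b t - θ a t : ℝ) * Complex.I))).re := by
  rw [isNBodySolution_orbits_iff (c := fun a t => r a t * Complex.exp (θ a t * Complex.I))]
  refine forall₂_congr fun a t => ?_
  simp only [deriv_deriv_polar_s1 (hr a) (hr' a) (hθ a) (hθ' a), orbitPull_polar, ← mul_smul_comm,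
    ← Finset.mul_sum, mul_right_inj' (Complex.exp_ne_zero _), Complex.ext_iff, Complex.re_sum,
    Complex.im_sum, Complex.smul_re, Complex.smul_im, smul_eq_mul]
  rw [and_comm, eq_div_iff (hr₀ a t), eq_sub_iff_add_eq, sub_eq_iff_eq_add',
    mul_comm (deriv (deriv (θ a)) t)]

end Polar

section Triangle

/-- The distance between two points with polar radii `r` and `ρ` whose polar angles differ
by `φ`. -/
noncomputable def polarDist (r ρ φ : ℝ) : ℝ := √(r ^ 2 - 2 * r * ρ * Real.cos φ + ρ ^ 2)

lemma polarDist_comm (r ρ φ : ℝ) : polarDist r ρ φ = polarDist ρ r φ := by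
  unfold polarDist
  ring_nf

lemma polarDist_neg (r ρ φ : ℝ) : polarDist r ρ (-φ) = polarDist r ρ φ := by
  rw [polarDist, polarDist, Real.cos_neg]

lemma norm_polar_sub (r ρ φ : ℝ) :
    ‖(ρ * Complex.exp (φ * Complex.I) - r : ℂ)‖ = polarDist r ρ φ := by
  rw [Complex.norm_eq_sqrt_sq_add_sq, polarDist, Complex.sub_re, Complex.sub_im,
    Complex.re_ofReal_mul, Complex.im_ofReal_mul, Complex.exp_ofReal_mul_I_re,
    Complex.exp_ofReal_mul_I_im, Complex.ofReal_re, Complex.ofReal_im]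
  congr 1
  linear_combination ρ ^ 2 * Real.sin_sq_add_cos_sq φ

lemma attraction_polar_sub (r ρ φ : ℝ) :
    attraction (ρ * Complex.exp (φ * Complex.I) - r : ℂ) =
      ⟨(ρ * Real.cos φ - r) / polarDist r ρ φ ^ 3, ρ * Real.sin φ / polarDist r ρ φ ^ 3⟩ := by
  rw [attraction, norm_polar_sub]
  apply Complex.ext <;>
    simp [Complex.exp_ofReal_mul_I_re, Complex.exp_ofReal_mul_I_im, inv_mul_eq_div,
      -Complex.ofReal_pow, -Complex.ofReal_inv]

lemma stdAddChar_mul_polar {N : ℕ} [NeZero N] (k : ℤ) (r θ : ℝ) :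
    ZMod.stdAddChar (k : ZMod N) * (r * Complex.exp (θ * Complex.I)) =
      r * Complex.exp ((θ + 2 * π * k / N : ℝ) * Complex.I) := by
  rw [ZMod.stdAddChar_coe, mul_left_comm, ← Complex.exp_add]
  push_cast
  ring_nf

lemma orbitPull_stdAddChar_three (z : ℂ) (ρ α : ℝ) :
    orbitPull (ZMod.stdAddChar (N := 3)) z (ρ * Complex.exp (α * Complex.I)) =
      attraction (ρ * Complex.exp (α * Complex.I) - z) +
      attraction (ρ * Complex.exp ((α + 2 * π / 3 : ℝ) * Complex.I) - z) +
      attraction (ρ * Complex.exp ((α - 2 * π / 3 : ℝ) * Complex.I) - z) := by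
  have sum_three (f : ZMod 3 → ℂ) : ∑ k, f k = f (0 : ℤ) + f (1 : ℤ) + f (-1 : ℤ) :=
    Fin.sum_univ_three f
  simp only [orbitPull, sum_three, stdAddChar_mul_polar]
  have angle (j : ℝ) : α + 2 * π * j / (3 : ℕ) = α + j * (2 * π / 3) := by push_cast; ring
  simp only [angle, Int.cast_zero, Int.cast_one, Int.cast_neg, zero_mul, one_mul, neg_mul,
    add_zero, ← sub_eq_add_neg]

lemma orbitPull_triangle {r : ℝ} (hr : 0 < r) :
    orbitPull (ZMod.stdAddChar (N := 3)) r r = ⟨-(1 / (√3 * r ^ 2)), 0⟩ := by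
  have cos_third : Real.cos (2 * π / 3) = -(1 / 2) := by
    rw [show 2 * π / 3 = π - π / 3 by ring, Real.cos_pi_sub, Real.cos_pi_div_three]
  have side : polarDist r r (2 * π / 3) = √3 * r := by
    rw [polarDist, cos_third, show r ^ 2 - 2 * r * r * -(1 / 2) + r ^ 2 = 3 * r ^ 2 by ring,
      Real.sqrt_mul zero_le_three, Real.sqrt_sq hr.le]
  have at_zero : (r : ℂ) = r * Complex.exp ((0 : ℝ) * Complex.I) := by simp
  have sqrt_three_sq : √3 ^ 2 = 3 := Real.sq_sqrt zero_le_three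
  conv_lhs => arg 3; rw [at_zero]
  simp only [orbitPull_stdAddChar_three, zero_add, zero_sub, attraction_polar_sub, polarDist_neg,
    side, Real.cos_neg, Real.sin_neg, cos_third, Real.cos_zero, Real.sin_zero]
  apply Complex.ext <;> simp only [Complex.add_re, Complex.add_im]
  · field_simp
    linear_combination 2 * sqrt_three_sq
  · ring

/-- The acceleration at the point `r` caused by unit masses at the vertices of the triangle of
radius `ρ` centred at `0` that has a vertex at the angle `π / 3 - δ`. For `δ = 0` the point faces
the midpoint of a side of the triangle. -/
noncomputable def antiprismPull (r ρ δ : ℝ) : ℂ :=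
  orbitPull (ZMod.stdAddChar (N := 3)) r (ρ * Complex.exp ((π / 3 - δ : ℝ) * Complex.I))

lemma cos_pi_div_three_sub (δ : ℝ) : Real.cos (π / 3 - δ) = Real.sin (π / 6 + δ) := by
  rw [← Real.cos_pi_div_two_sub]
  ring_nf

lemma cos_pi_div_three_add (δ : ℝ) : Real.cos (π / 3 + δ) = Real.sin (π / 6 - δ) := by
  simpa [← sub_eq_add_neg] using cos_pi_div_three_sub (-δ)

lemma sin_pi_div_three_sub (δ : ℝ) : Real.sin (π / 3 - δ) = Real.cos (π / 6 + δ) := by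
  rw [← Real.sin_pi_div_two_sub]
  ring_nf

lemma sin_pi_div_three_add (δ : ℝ) : Real.sin (π / 3 + δ) = Real.cos (π / 6 - δ) := by
  simpa [← sub_eq_add_neg] using sin_pi_div_three_sub (-δ)

lemma polarDist_pi_div_three_sub (r ρ δ : ℝ) :
    polarDist r ρ (π / 3 - δ) = √(r ^ 2 - 2 * r * ρ * Real.sin (π / 6 + δ) + ρ ^ 2) := by
  rw [polarDist, cos_pi_div_three_sub]

lemma polarDist_pi_sub (r ρ δ : ℝ) :
    polarDist r ρ (π - δ) = √(r ^ 2 + 2 * r * ρ * Real.cos δ + ρ ^ 2) := by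
  rw [polarDist, Real.cos_pi_sub, mul_neg, sub_neg_eq_add]

lemma polarDist_pi_div_three_add (r ρ δ : ℝ) :
    polarDist r ρ (π / 3 + δ) = √(r ^ 2 - 2 * r * ρ * Real.sin (π / 6 - δ) + ρ ^ 2) := by
  rw [polarDist, cos_pi_div_three_add]

lemma antiprismPull_eq (r ρ δ : ℝ) :
    antiprismPull r ρ δ =
      ⟨(-r + ρ * Real.sin (π / 6 + δ)) / polarDist r ρ (π / 3 - δ) ^ 3
          + (-r - ρ * Real.cos δ) / polarDist r ρ (π - δ) ^ 3
          + (-r + ρ * Real.sin (π / 6 - δ)) / polarDist r ρ (π / 3 + δ) ^ 3,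
        ρ * Real.cos (π / 6 + δ) / polarDist r ρ (π / 3 - δ) ^ 3
          + ρ * Real.sin δ / polarDist r ρ (π - δ) ^ 3
          - ρ * Real.cos (π / 6 - δ) / polarDist r ρ (π / 3 + δ) ^ 3⟩ := by
  have angle₂ : π / 3 - δ + 2 * π / 3 = π - δ := by ring
  have angle₃ : π / 3 - δ - 2 * π / 3 = -(π / 3 + δ) := by ring
  rw [antiprismPull, orbitPull_stdAddChar_three, angle₂, angle₃]
  simp only [attraction_polar_sub, polarDist_neg, Real.cos_neg, Real.sin_neg, Real.cos_pi_sub,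
    Real.sin_pi_sub, cos_pi_div_three_sub, cos_pi_div_three_add, sin_pi_div_three_sub,
    sin_pi_div_three_add]
  apply Complex.ext <;> simp only [Complex.add_re, Complex.add_im] <;> ring

theorem isNBodySolution_two_triangles_iff {m₁ m₂ : ℝ} {r₁ r₂ θ β : ℝ → ℝ}
    (hr₁pos : ∀ t, 0 < r₁ t) (hr₂pos : ∀ t, 0 < r₂ t)
    (hr₁ : Differentiable ℝ r₁) (hr₁' : Differentiable ℝ (deriv r₁))
    (hr₂ : Differentiable ℝ r₂) (hr₂' : Differentiable ℝ (deriv r₂))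
    (hθ : Differentiable ℝ θ) (hθ' : Differentiable ℝ (deriv θ))
    (hβ : Differentiable ℝ β) (hβ' : Differentiable ℝ (deriv β)) :
    IsNBodySolution (fun p : Fin 2 × ZMod 3 => ![m₁, m₂] p.1)
        (fun p t => ZMod.stdAddChar p.2 * (![r₁, r₂] p.1 t *
          Complex.exp (![θ, fun t => β t + π / 3] p.1 t * Complex.I))) ↔
      ∀ t,
        deriv (deriv θ) t = (m₂ * (antiprismPull (r₁ t) (r₂ t) (θ t - β t)).im
            - 2 * deriv r₁ t * deriv θ t) / r₁ t ∧
        deriv (deriv r₁) t = r₁ t * deriv θ t ^ 2 - m₁ / (√3 * r₁ t ^ 2)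
            + m₂ * (antiprismPull (r₁ t) (r₂ t) (θ t - β t)).re ∧
        deriv (deriv β) t = (m₁ * -(antiprismPull (r₂ t) (r₁ t) (θ t - β t)).im
            - 2 * deriv r₂ t * deriv β t) / r₂ t ∧
        deriv (deriv r₂) t = r₂ t * deriv β t ^ 2
            + m₁ * (antiprismPull (r₂ t) (r₁ t) (θ t - β t)).re - m₂ / (√3 * r₂ t ^ 2) := by
  rw [isNBodySolution_polar_orbits_iff (m := ![m₁, m₂]) (r := ![r₁, r₂])
    (θ := ![θ, fun t => β t + π / 3]), forall_comm]
  · refine forall_congr' fun t => ?_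
    have angle₁ : β t + π / 3 - θ t = π / 3 - (θ t - β t) := by ring
    have angle₂ : θ t - (β t + π / 3) = -(π / 3 - (θ t - β t)) := by ring
    simp only [Fin.forall_fin_two, Fin.sum_univ_two, Matrix.cons_val_zero, Matrix.cons_val_one,
      angle₁, angle₂, sub_self, orbitPull_polar_neg, antiprismPull, Complex.conj_re,
      Complex.conj_im, deriv_add_const', Complex.ofReal_zero, zero_mul, Complex.exp_zero, mul_one,
      orbitPull_triangle (hr₁pos t), orbitPull_triangle (hr₂pos t)]
    simp only [mul_zero, zero_add, add_zero, mul_neg, mul_one_div, sub_eq_add_neg, add_assoc,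
      and_assoc]
  · exact Fin.forall_fin_two.mpr ⟨fun t => (hr₁pos t).ne', fun t => (hr₂pos t).ne'⟩
  all_goals simp [Fin.forall_fin_two, *]

lemma orthonormalBasisOneI_repr_polar (r θ : ℝ) :
    Complex.orthonormalBasisOneI.repr (r * Complex.exp (θ * Complex.I)) =
      vec2 (r * Real.cos θ) (r * Real.sin θ) := by
  ext i
  rw [Complex.orthonormalBasisOneI_repr_apply, Complex.re_ofReal_mul, Complex.im_ofReal_mul,
    Complex.exp_ofReal_mul_I_re, Complex.exp_ofReal_mul_I_im]
  rfl

lemma triangle_eq_repr_orbit {x : ZMod 3 → EuclideanSpace ℝ (Fin 2)} {r φ : ℝ}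
    (h₀ : x 0 = vec2 (r * Real.cos φ) (r * Real.sin φ))
    (h₁ : x 1 = vec2 (r * Real.cos (φ + 2 * π / 3)) (r * Real.sin (φ + 2 * π / 3)))
    (h₂ : x 2 = vec2 (r * Real.cos (φ + 4 * π / 3)) (r * Real.sin (φ + 4 * π / 3)))
    (k : ZMod 3) :
    x k = Complex.orthonormalBasisOneI.repr
      (ZMod.stdAddChar k * (r * Complex.exp (φ * Complex.I))) := by
  have vertex {ψ : ℝ} (j : ℤ) (h : ψ = φ + 2 * π * j / (3 : ℕ)) :
      vec2 (r * Real.cos ψ) (r * Real.sin ψ) = Complex.orthonormalBasisOneI.repr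
        (ZMod.stdAddChar (j : ZMod 3) * (r * Complex.exp (φ * Complex.I))) := by
    rw [stdAddChar_mul_polar, orthonormalBasisOneI_repr_polar, h]
  fin_cases k
  · exact h₀.trans (vertex 0 (by norm_num))
  · exact h₁.trans (vertex 1 (by norm_num))
  · exact h₂.trans (vertex 2 (by norm_num; ring))

/-- The numbering of six bodies as vertices of two triangles: the vertex `k` of the triangle `a`
is the body `3 * a + k`. -/
def twoTrianglesEquiv : Fin 2 × ZMod 3 ≃ Fin 6 := finProdFinEquiv

end Triangle

/-- Proposition: under the two-triangle 6-body ansatz, Newton's equations of the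
6-body problem are equivalent to the reduced system for `r1, θ, r2, β`. -/
theorem six_body_reduced_system
    (m2 : ℝ) (hm2 : 0 < m2)
    (r1 r2 θ β : ℝ → ℝ)
    (hr1pos : ∀ t, 0 < r1 t) (hr2pos : ∀ t, 0 < r2 t)
    (hr1d : Differentiable ℝ r1) (hr1d2 : Differentiable ℝ (deriv r1))
    (hr2d : Differentiable ℝ r2) (hr2d2 : Differentiable ℝ (deriv r2))
    (hθd : Differentiable ℝ θ) (hθd2 : Differentiable ℝ (deriv θ))
    (hβd : Differentiable ℝ β) (hβd2 : Differentiable ℝ (deriv β))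
    (δ d1 d2 d3 A1 B1 A2 B2 : ℝ → ℝ)
    (hδ : ∀ t, δ t = θ t - β t)
    (hd1 : ∀ t, d1 t =
      Real.sqrt ((r1 t)^2 - 2 * r1 t * r2 t * Real.sin (π/6 + δ t) + (r2 t)^2))
    (hd2 : ∀ t, d2 t =
      Real.sqrt ((r1 t)^2 + 2 * r1 t * r2 t * Real.cos (δ t) + (r2 t)^2))
    (hd3 : ∀ t, d3 t =
      Real.sqrt ((r1 t)^2 - 2 * r1 t * r2 t * Real.sin (π/6 - δ t) + (r2 t)^2))
    (hd1pos : ∀ t, 0 < d1 t) (hd2pos : ∀ t, 0 < d2 t) (hd3pos : ∀ t, 0 < d3 t)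
    (hA1 : ∀ t, A1 t =
      (-(r1 t) + r2 t * Real.sin (π/6 + δ t)) / (d1 t)^3
      + (-(r1 t) - r2 t * Real.cos (δ t)) / (d2 t)^3
      + (-(r1 t) + r2 t * Real.sin (π/6 - δ t)) / (d3 t)^3)
    (hB1 : ∀ t, B1 t =
      r2 t * Real.cos (π/6 + δ t) / (d1 t)^3
      + r2 t * Real.sin (δ t) / (d2 t)^3
      - r2 t * Real.cos (π/6 - δ t) / (d3 t)^3)
    (hA2 : ∀ t, A2 t =
      (r1 t * Real.sin (π/6 + δ t) - r2 t) / (d1 t)^3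
      + (r1 t * Real.sin (π/6 - δ t) - r2 t) / (d3 t)^3
      + (-(r1 t * Real.cos (δ t)) - r2 t) / (d2 t)^3)
    (hB2 : ∀ t, B2 t =
      -(r1 t * Real.cos (π/6 + δ t)) / (d1 t)^3
      + r1 t * Real.cos (π/6 - δ t) / (d3 t)^3
      - r1 t * Real.sin (δ t) / (d2 t)^3)
    (m : Fin 6 → ℝ)
    (hma : m 0 = 1) (hmb : m 1 = 1) (hmc : m 2 = 1)
    (hmd : m 3 = m2) (hme : m 4 = m2) (hmf : m 5 = m2)
    (bodies : Fin 6 → ℝ → EuclideanSpace ℝ (Fin 2))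
    (hb0 : ∀ t, bodies 0 t = vec2 (r1 t * Real.cos (θ t)) (r1 t * Real.sin (θ t)))
    (hb1 : ∀ t, bodies 1 t =
      vec2 (r1 t * Real.cos (θ t + 2*π/3)) (r1 t * Real.sin (θ t + 2*π/3)))
    (hb2 : ∀ t, bodies 2 t =
      vec2 (r1 t * Real.cos (θ t + 4*π/3)) (r1 t * Real.sin (θ t + 4*π/3)))
    (hb3 : ∀ t, bodies 3 t =
      vec2 (r2 t * Real.cos (β t + π/3)) (r2 t * Real.sin (β t + π/3)))
    (hb4 : ∀ t, bodies 4 t =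
      vec2 (r2 t * Real.cos (β t + π/3 + 2*π/3)) (r2 t * Real.sin (β t + π/3 + 2*π/3)))
    (hb5 : ∀ t, bodies 5 t =
      vec2 (r2 t * Real.cos (β t + π/3 + 4*π/3)) (r2 t * Real.sin (β t + π/3 + 4*π/3))) :
    (∀ (i : Fin 6) (t : ℝ),
        deriv (deriv (bodies i)) t =
          ∑ j ∈ Finset.univ.erase i,
            (m j / ‖bodies j t - bodies i t‖ ^ 3) • (bodies j t - bodies i t))
    ↔
    (∀ t : ℝ,
      deriv (deriv θ) t = (m2 * B1 t - 2 * deriv r1 t * deriv θ t) / r1 t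
      ∧ deriv (deriv r1) t =
          r1 t * (deriv θ t)^2 - 1 / (Real.sqrt 3 * (r1 t)^2) + m2 * A1 t
      ∧ deriv (deriv β) t = (B2 t - 2 * deriv r2 t * deriv β t) / r2 t
      ∧ deriv (deriv r2) t =
          r2 t * (deriv β t)^2 + A2 t - m2 / (Real.sqrt 3 * (r2 t)^2)) := by
  have mass : m ∘ twoTrianglesEquiv = fun p => ![1, m2] p.1 := by
    funext ⟨a, k⟩
    fin_cases a <;> fin_cases k <;> assumption
  have position : bodies ∘ twoTrianglesEquiv = fun p t => Complex.orthonormalBasisOneI.repr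
      (ZMod.stdAddChar p.2 *
        (![r1, r2] p.1 t * Complex.exp (![θ, fun t => β t + π / 3] p.1 t * Complex.I))) := by
    funext ⟨a, k⟩ t
    fin_cases a
    · exact triangle_eq_repr_orbit (x := fun k => bodies (twoTrianglesEquiv (0, k)) t)
        (hb0 t) (hb1 t) (hb2 t) k
    · exact triangle_eq_repr_orbit (x := fun k => bodies (twoTrianglesEquiv (1, k)) t)
        (hb3 t) (hb4 t) (hb5 t) k
  have pull₁ (t) : antiprismPull (r1 t) (r2 t) (θ t - β t) = ⟨A1 t, B1 t⟩ := by
    rw [← hδ, antiprismPull_eq, polarDist_pi_div_three_sub, polarDist_pi_sub,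
      polarDist_pi_div_three_add, ← hd1, ← hd2, ← hd3, hA1, hB1]
  have pull₂ (t) : antiprismPull (r2 t) (r1 t) (θ t - β t) = ⟨A2 t, -B2 t⟩ := by
    simp only [← hδ, antiprismPull_eq, polarDist_comm (r2 t), polarDist_pi_div_three_sub,
      polarDist_pi_sub, polarDist_pi_div_three_add, ← hd1, ← hd2, ← hd3, hA2, hB2]
    congr 1 <;> ring
  rw [← isNBodySolution_iff_sum_erase, ← isNBodySolution_comp_equiv twoTrianglesEquiv, mass,
    position, isNBodySolution_linearIsometryEquiv_comp, isNBodySolution_two_triangles_iff hr1pos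
    hr2pos hr1d hr1d2 hr2d hr2d2 hθd hθd2 hβd hβd2]
  simp only [pull₁, pull₂, one_mul, neg_neg]
end

section
/- Suppose r1, r2, θ, β are twice differentiable on an interval, r1(t), r2(t) > 0 and d1(t), d2(t), d3(t) > 0 there, and they satisfy the reduced 6-body system θ̈ = (m2 B1 − 2 ṙ1 θ̇)/r1, r̈1 = r1 θ̇² − 1/(√3 r1²) + m2 A1, β̈ = (B2 − 2 ṙ2 β̇)/r2, r̈2 = r2 β̇² + A2 − m2/(√3 r2²). Then the angular momentum L(t) = 3 r1(t)² θ̇(t) + 3 m2 r2(t)² β̇(t) is constant on the interval. -/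
open Real

/-!
The rate of change of `r² ω` is the torque `r F` of the transverse acceleration `F`, since the
Coriolis term `2 ṙ ω` is exactly what differentiating `r²` produces. The two triangles exert
opposite torques on each other, so the torques in the weighted sum `L` cancel.
-/

/-- The angular momentum per unit mass of a body in planar polar coordinates, at radius `r` and
angular velocity `ω`. The angle enters only through `ω`, which is `deriv θ` in applications. -/
def specificAngularMomentum (r ω : ℝ → ℝ) (t : ℝ) : ℝ :=
  r t ^ 2 * ω t

theorem hasDerivAt_specificAngularMomentum {r ω : ℝ → ℝ} {r' ω' t : ℝ}
    (hr : HasDerivAt r r' t) (hω : HasDerivAt ω ω' t) :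
    HasDerivAt (specificAngularMomentum r ω) (r t * (r t * ω' + 2 * r' * ω t)) t := by
  refine ((hr.fun_pow 2).fun_mul hω).congr_deriv ?_
  push_cast
  ring

theorem hasDerivAt_specificAngularMomentum_of_transverse_eq {r ω : ℝ → ℝ} {F t : ℝ}
    (hr₀ : r t ≠ 0) (hr : DifferentiableAt ℝ r t) (hω : DifferentiableAt ℝ ω t)
    (hF : deriv ω t = (F - 2 * deriv r t * ω t) / r t) :
    HasDerivAt (specificAngularMomentum r ω) (r t * F) t := by
  have newton : r t * deriv ω t + 2 * deriv r t * ω t = F := by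
    rw [hF, mul_div_cancel₀ _ hr₀, sub_add_cancel]
  simpa only [newton] using hasDerivAt_specificAngularMomentum hr.hasDerivAt hω.hasDerivAt

theorem six_body_angular_momentum_conserved_general {s : Set ℝ} (hs : IsOpen s)
    (hs_conn : IsPreconnected s) {m2 : ℝ} {r1 r2 ω1 ω2 B1 B2 : ℝ → ℝ}
    (hr1 : ∀ t ∈ s, r1 t ≠ 0) (hr2 : ∀ t ∈ s, r2 t ≠ 0)
    (hr1d : ∀ t ∈ s, DifferentiableAt ℝ r1 t) (hr2d : ∀ t ∈ s, DifferentiableAt ℝ r2 t)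
    (hω1d : ∀ t ∈ s, DifferentiableAt ℝ ω1 t) (hω2d : ∀ t ∈ s, DifferentiableAt ℝ ω2 t)
    (hω1 : ∀ t ∈ s, deriv ω1 t = (m2 * B1 t - 2 * deriv r1 t * ω1 t) / r1 t)
    (hω2 : ∀ t ∈ s, deriv ω2 t = (B2 t - 2 * deriv r2 t * ω2 t) / r2 t)
    (torque_balance : ∀ t ∈ s, r1 t * B1 t + r2 t * B2 t = 0) :
    ∀ t1 ∈ s, ∀ t2 ∈ s,
      3 * r1 t1 ^ 2 * ω1 t1 + 3 * m2 * r2 t1 ^ 2 * ω2 t1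
        = 3 * r1 t2 ^ 2 * ω1 t2 + 3 * m2 * r2 t2 ^ 2 * ω2 t2 := by
  let L : ℝ → ℝ := fun t =>
    3 * specificAngularMomentum r1 ω1 t + 3 * m2 * specificAngularMomentum r2 ω2 t
  have hL : ∀ t ∈ s, HasDerivAt L 0 t := fun t ht => by
    have h1 := hasDerivAt_specificAngularMomentum_of_transverse_eq
      (hr1 t ht) (hr1d t ht) (hω1d t ht) (hω1 t ht)
    have h2 := hasDerivAt_specificAngularMomentum_of_transverse_eq
      (hr2 t ht) (hr2d t ht) (hω2d t ht) (hω2 t ht)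
    refine ((h1.const_mul 3).fun_add (h2.const_mul (3 * m2))).congr_deriv ?_
    linear_combination 3 * m2 * torque_balance t ht
  intro t1 ht1 t2 ht2
  have L_eq : L t1 = L t2 := hs.is_const_of_deriv_eq_zero hs_conn
    (fun t ht => (hL t ht).differentiableAt.differentiableWithinAt)
    (fun t ht => (hL t ht).deriv) ht1 ht2
  simpa only [L, specificAngularMomentum, mul_assoc] using L_eq

/-- Conservation of angular momentum for the reduced 6-body system:
`L = 3 r1² θ̇ + 3 m2 r2² β̇` is constant on the interval. -/
theorem six_body_angular_momentum_conserved
    (m2 : ℝ) (hm2 : 0 < m2) (a b : ℝ)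
    (r1 r2 θ β : ℝ → ℝ)
    (δ d1 d2 d3 A1 B1 A2 B2 : ℝ → ℝ)
    (hδ : ∀ t, δ t = θ t - β t)
    (hd1 : ∀ t, d1 t =
      Real.sqrt ((r1 t)^2 - 2 * r1 t * r2 t * Real.sin (π/6 + δ t) + (r2 t)^2))
    (hd2 : ∀ t, d2 t =
      Real.sqrt ((r1 t)^2 + 2 * r1 t * r2 t * Real.cos (δ t) + (r2 t)^2))
    (hd3 : ∀ t, d3 t =
      Real.sqrt ((r1 t)^2 - 2 * r1 t * r2 t * Real.sin (π/6 - δ t) + (r2 t)^2))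
    (hA1 : ∀ t, A1 t =
      (-(r1 t) + r2 t * Real.sin (π/6 + δ t)) / (d1 t)^3
      + (-(r1 t) - r2 t * Real.cos (δ t)) / (d2 t)^3
      + (-(r1 t) + r2 t * Real.sin (π/6 - δ t)) / (d3 t)^3)
    (hB1 : ∀ t, B1 t =
      r2 t * Real.cos (π/6 + δ t) / (d1 t)^3
      + r2 t * Real.sin (δ t) / (d2 t)^3
      - r2 t * Real.cos (π/6 - δ t) / (d3 t)^3)
    (hA2 : ∀ t, A2 t =
      (r1 t * Real.sin (π/6 + δ t) - r2 t) / (d1 t)^3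
      + (r1 t * Real.sin (π/6 - δ t) - r2 t) / (d3 t)^3
      + (-(r1 t * Real.cos (δ t)) - r2 t) / (d2 t)^3)
    (hB2 : ∀ t, B2 t =
      -(r1 t * Real.cos (π/6 + δ t)) / (d1 t)^3
      + r1 t * Real.cos (π/6 - δ t) / (d3 t)^3
      - r1 t * Real.sin (δ t) / (d2 t)^3)
    (hr1pos : ∀ t ∈ Set.Ioo a b, 0 < r1 t) (hr2pos : ∀ t ∈ Set.Ioo a b, 0 < r2 t)
    (hd1pos : ∀ t ∈ Set.Ioo a b, 0 < d1 t) (hd2pos : ∀ t ∈ Set.Ioo a b, 0 < d2 t)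
    (hd3pos : ∀ t ∈ Set.Ioo a b, 0 < d3 t)
    (hr1d : ∀ t ∈ Set.Ioo a b, DifferentiableAt ℝ r1 t)
    (hr1d2 : ∀ t ∈ Set.Ioo a b, DifferentiableAt ℝ (deriv r1) t)
    (hr2d : ∀ t ∈ Set.Ioo a b, DifferentiableAt ℝ r2 t)
    (hr2d2 : ∀ t ∈ Set.Ioo a b, DifferentiableAt ℝ (deriv r2) t)
    (hθd : ∀ t ∈ Set.Ioo a b, DifferentiableAt ℝ θ t)
    (hθd2 : ∀ t ∈ Set.Ioo a b, DifferentiableAt ℝ (deriv θ) t)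
    (hβd : ∀ t ∈ Set.Ioo a b, DifferentiableAt ℝ β t)
    (hβd2 : ∀ t ∈ Set.Ioo a b, DifferentiableAt ℝ (deriv β) t)
    (hODE : ∀ t ∈ Set.Ioo a b,
      deriv (deriv θ) t = (m2 * B1 t - 2 * deriv r1 t * deriv θ t) / r1 t
      ∧ deriv (deriv r1) t =
          r1 t * (deriv θ t)^2 - 1 / (Real.sqrt 3 * (r1 t)^2) + m2 * A1 t
      ∧ deriv (deriv β) t = (B2 t - 2 * deriv r2 t * deriv β t) / r2 t
      ∧ deriv (deriv r2) t =
          r2 t * (deriv β t)^2 + A2 t - m2 / (Real.sqrt 3 * (r2 t)^2)) :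
    ∀ t1 ∈ Set.Ioo a b, ∀ t2 ∈ Set.Ioo a b,
      3 * (r1 t1)^2 * deriv θ t1 + 3 * m2 * (r2 t1)^2 * deriv β t1
        = 3 * (r1 t2)^2 * deriv θ t2 + 3 * m2 * (r2 t2)^2 * deriv β t2 := by
  have torque_balance : ∀ t ∈ Set.Ioo a b, r1 t * B1 t + r2 t * B2 t = 0 := fun t _ => by
    rw [hB1, hB2]; ring
  exact six_body_angular_momentum_conserved_general isOpen_Ioo isPreconnected_Ioo
    (fun t ht => (hr1pos t ht).ne') (fun t ht => (hr2pos t ht).ne') hr1d hr2d hθd2 hβd2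
    (fun t ht => (hODE t ht).1) (fun t ht => (hODE t ht).2.2.1) torque_balance
end

section
/- Let (r1, r2, θ, β) be a solution on ℝ of the reduced 4-body system r̈1 = r1 θ̇² − 1/(4 r1²) + m2[(r2 sin δ − r1)/d1³ + (−r2 sin δ − r1)/d2³], θ̈ = (m2 r2 cos δ (1/d1³ − 1/d2³) − 2 ṙ1 θ̇)/r1, r̈2 = r2 β̇² − m2/(4 r2²) + [(r1 sin δ − r2)/d1³ + (−r1 sin δ − r2)/d2³], β̈ = (r1 cos δ (1/d2³ − 1/d1³) − 2 ṙ2 β̇)/r2, with r1(t), r2(t) > 0 and d1(t), d2(t) > 0 for all t, satisfying the initial conditions r1(0) = x1, r2(0) = x2, θ(0) = 0, β(0) = 0, ṙ1(0) = 0, ṙ2(0) = 0, θ̇(0) = x3, β̇(0) = x4. Suppose there is T > 0 such that r1(T) = x1, r2(T) = x2, ṙ1(T) = 0, ṙ2(T) = 0, θ̇(T) = x3, β̇(T) = x4, and θ(T) − β(T) = π. Then for all t ∈ ℝ: r1(t+T) = r1(t), r2(t+T) = r2(t), θ(t+T) = θ(t) + θ(T), β(t+T) = β(t) + θ(T) −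 π. Consequently, if R denotes the rotation of the plane by angle θ(T), the bodies of the two-pair ansatz satisfy r⃗1(t+T) = R r⃗1(t), r⃗2(t+T) = R r⃗2(t), r⃗3(t+T) = R r⃗4(t), and r⃗4(t+T) = R r⃗3(t); i.e., the solution is periodic up to a rotation and the exchange of bodies 3 and 4. -/
/-!
Write the reduced system as a first-order autonomous system. Its right-hand side depends on the
angles only through the accelerations, which are `π`-periodic in `δ = θ - β`: replacing `δ` by
`δ + π` exchanges `d₁` and `d₂` and changes the signs of `sin δ` and `cos δ`. Hence the vector field
is invariant under rotating the two pairs by angles whose difference is a multiple of `π`. At time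
`T` the state is the initial state moved by such a symmetry, so uniqueness propagates this relation
to all times. The extra half turn of the second pair is the exchange of bodies 3 and 4.
-/

open Real

section AutonomousODE

open Topology

variable {E : Type*} [NormedAddCommGroup E] [NormedSpace ℝ E] {v : E → E} {f g : ℝ → E}

theorem integralCurve_eq_of_locally_lipschitz
    (hv : ∀ t, ∃ K, ∃ s ∈ 𝓝 (f t), LipschitzOnWith K v s)
    (hf : ∀ t, HasDerivAt f (v (f t)) t) (hg : ∀ t, HasDerivAt g (v (g t)) t)
    {t₀ : ℝ} (heq : f t₀ = g t₀) : f = g := by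
  have hfc : Continuous f := continuous_iff_continuousAt.2 fun t => (hf t).continuousAt
  have hgc : Continuous g := continuous_iff_continuousAt.2 fun t => (hg t).continuousAt
  have hopen : IsOpen {t | f t = g t} := by
    refine isOpen_iff_mem_nhds.2 fun t (ht : f t = g t) => ?_
    obtain ⟨K, s, hs, hK⟩ := hv t
    have hfs : ∀ᶠ u in 𝓝 t, f u ∈ s := hfc.continuousAt.eventually hs
    have hgs : ∀ᶠ u in 𝓝 t, g u ∈ s := hgc.continuousAt.eventually (ht ▸ hs)
    exact ODE_solution_unique_of_eventually (v := fun _ => v) (s := fun _ => s)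
      (.of_forall fun _ => hK) (hfs.mono fun u hu => ⟨hf u, hu⟩)
      (hgs.mono fun u hu => ⟨hg u, hu⟩) ht
  have huniv : {t | f t = g t} = Set.univ :=
    IsClopen.eq_univ ⟨isClosed_eq hfc hgc, hopen⟩ ⟨t₀, heq⟩
  exact funext (Set.eq_univ_iff_forall.1 huniv)

theorem integralCurve_add_period_of_periodic {c : E} (hvc : Function.Periodic v c)
    (hv : ∀ t, ∃ K, ∃ s ∈ 𝓝 (f t), LipschitzOnWith K v s)
    (hf : ∀ t, HasDerivAt f (v (f t)) t) {t₀ T : ℝ} (hT : f (t₀ + T) = f t₀ + c) (t : ℝ) :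
    f (t + T) = f t + c := by
  have hshift (t : ℝ) : HasDerivAt (fun t => f (t + T)) (v (f (t + T))) t :=
    (hf (t + T)).comp_add_const t T
  have hadd (t : ℝ) : HasDerivAt (fun t => f t + c) (v (f t + c)) t :=
    (hvc (f t)).symm ▸ (hf t).add_const c
  exact congrFun (integralCurve_eq_of_locally_lipschitz (fun t => hv (t + T)) hshift hadd hT) t

end AutonomousODE

section Accelerations

/-- The distance between the points with polar coordinates `(r, θ)` and `(s, β + π / 2)`, where
`δ = θ - β`. The paper's `d₁` is `separation r₁ r₂ δ` and its `d₂` is `separation r₁ r₂ (-δ)`. -/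
noncomputable def separation (r s δ : ℝ) : ℝ :=
  √(r ^ 2 + s ^ 2 - 2 * r * s * sin δ)

/-- The radial acceleration of a pair of bodies of mass `m` at radius `r` and angular velocity `ω`,
attracted by a pair of mass `M` at radius `s`. For the first pair `δ = θ - β`; for the second pair
the same formula holds with `δ = β - θ`. -/
noncomputable def radialAcc (m M r s δ ω : ℝ) : ℝ :=
  r * ω ^ 2 - m / (4 * r ^ 2)
    + M * ((s * sin δ - r) / separation r s δ ^ 3
      + (-(s * sin δ) - r) / separation r s (-δ) ^ 3)

/-- The angular acceleration of a pair of bodies at radius `r`, with radial velocity `v` and angular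
velocity `ω`, attracted by a pair of mass `M` at radius `s`. The convention for `δ` is that of
`radialAcc`. -/
noncomputable def angularAcc (M r s δ v ω : ℝ) : ℝ :=
  (M * s * cos δ * (1 / separation r s δ ^ 3 - 1 / separation r s (-δ) ^ 3) - 2 * v * ω) / r

theorem separation_neg (r s δ : ℝ) :
    separation r s (-δ) = √(r ^ 2 + s ^ 2 + 2 * r * s * sin δ) := by
  rw [separation, sin_neg, mul_neg, sub_neg_eq_add]

theorem separation_comm (r s δ : ℝ) : separation r s δ = separation s r δ := by
  rw [separation, separation, add_comm (r ^ 2), mul_right_comm 2 r s]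

theorem radialAcc_swap_neg (m M r s δ ω : ℝ) :
    radialAcc m M s r (-δ) ω = s * ω ^ 2 - m / (4 * s ^ 2)
      + M * ((r * sin δ - s) / separation r s δ ^ 3
        + (-(r * sin δ) - s) / separation r s (-δ) ^ 3) := by
  simp only [radialAcc, sin_neg, mul_neg, neg_neg, separation_comm s r]
  rw [add_comm (_ / separation r s (-δ) ^ 3)]

theorem angularAcc_swap_neg (M r s δ v ω : ℝ) :
    angularAcc M s r (-δ) v ω =
      (M * r * cos δ * (1 / separation r s (-δ) ^ 3 - 1 / separation r s δ ^ 3)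
        - 2 * v * ω) / s := by
  rw [angularAcc, cos_neg, neg_neg, separation_comm s r, separation_comm s r]

theorem separation_add_pi (r s δ : ℝ) : separation r s (δ + π) = separation r s (-δ) := by
  rw [separation, separation, sin_add_pi, sin_neg]

theorem separation_neg_add_pi (r s δ : ℝ) : separation r s (-(δ + π)) = separation r s δ := by
  rw [separation, separation, sin_neg, sin_add_pi, neg_neg]

theorem radialAcc_periodic (m M r s ω : ℝ) :
    Function.Periodic (fun δ => radialAcc m M r s δ ω) π := fun δ => by
  simp only [radialAcc, separation_add_pi, separation_neg_add_pi, sin_add_pi]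
  ring

theorem angularAcc_periodic (M r s v ω : ℝ) :
    Function.Periodic (fun δ => angularAcc M r s δ v ω) π := fun δ => by
  simp only [angularAcc, separation_add_pi, separation_neg_add_pi, cos_add_pi]
  ring

theorem contDiffAt_separation {x : ℝ × ℝ × ℝ} {n : WithTop ℕ∞}
    (h : separation x.1 x.2.1 x.2.2 ≠ 0) :
    ContDiffAt ℝ n (fun x : ℝ × ℝ × ℝ => separation x.1 x.2.1 x.2.2) x := by
  have hsq : x.1 ^ 2 + x.2.1 ^ 2 - 2 * x.1 * x.2.1 * sin x.2.2 ≠ 0 := fun h0 =>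
    h (by rw [separation, h0, sqrt_zero])
  unfold separation
  fun_prop (disch := assumption)

end Accelerations

section PhaseSpace

/-- The state `(r, φ, ṙ, φ̇)` of a pair of opposite bodies with polar coordinates `(r, φ)` and
`(r, φ + π)`. A nested product is used so that it carries its normed space structure. -/
abbrev PairState := ℝ × ℝ × ℝ × ℝ

/-- The velocity in `PairState` of a pair of bodies of mass `m` in state `p`, in the presence of a
pair of bodies of mass `M` in state `q`. -/
noncomputable def pairField (m M : ℝ) (p q : PairState) : PairState :=
  (p.2.2.1, p.2.2.2, radialAcc m M p.1 q.1 (p.2.1 - q.2.1) p.2.2.2,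
    angularAcc M p.1 q.1 (p.2.1 - q.2.1) p.2.2.1 p.2.2.2)

/-- The first-order vector field of the reduced system with masses `m₁`, `m₁`, `m₂`, `m₂`. The two
pairs enter symmetrically because exchanging them replaces `δ` by `-δ`. -/
noncomputable def twoPairField (m₁ m₂ : ℝ) (z : PairState × PairState) : PairState × PairState :=
  (pairField m₁ m₂ z.1 z.2, pairField m₂ m₁ z.2 z.1)

/-- The rotation of a pair by the angle `c`, as a translation vector in `PairState`. -/
def angleShift (c : ℝ) : PairState := (0, c, 0, 0)

theorem pairField_add_angleShift (m M : ℝ) (p q : PairState) {c c' : ℝ} {n : ℤ}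
    (hc : c - c' = n * π) :
    pairField m M (p + angleShift c) (q + angleShift c') = pairField m M p q := by
  have hangle : p.2.1 + c - (q.2.1 + c') = p.2.1 - q.2.1 + n * π := by rw [← hc]; ring
  have hradial := (radialAcc_periodic m M p.1 q.1 p.2.2.2).int_mul n (p.2.1 - q.2.1)
  have hangular := (angularAcc_periodic M p.1 q.1 p.2.2.1 p.2.2.2).int_mul n (p.2.1 - q.2.1)
  simp only [pairField, angleShift, Prod.fst_add, Prod.snd_add, add_zero, hangle, hradial, hangular]

theorem twoPairField_periodic (m₁ m₂ : ℝ) {c c' : ℝ} {n : ℤ} (hc : c - c' = n * π) :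
    Function.Periodic (twoPairField m₁ m₂) (angleShift c, angleShift c') := fun z =>
  have hc' : c' - c = (-n : ℤ) * π := by rw [Int.cast_neg, neg_mul, ← hc, neg_sub]
  Prod.ext (pairField_add_angleShift m₁ m₂ z.1 z.2 hc) (pairField_add_angleShift m₂ m₁ z.2 z.1 hc')

theorem contDiffAt_pairField (m M : ℝ) {z : PairState × PairState} {n : WithTop ℕ∞}
    (hr : z.1.1 ≠ 0) (hsep : separation z.1.1 z.2.1 (z.1.2.1 - z.2.2.1) ≠ 0)
    (hsep' : separation z.1.1 z.2.1 (-(z.1.2.1 - z.2.2.1)) ≠ 0) :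
    ContDiffAt ℝ n (fun z : PairState × PairState => pairField m M z.1 z.2) z := by
  have hdist : ContDiffAt ℝ n (fun z : PairState × PairState =>
      separation z.1.1 z.2.1 (z.1.2.1 - z.2.2.1)) z :=
    (contDiffAt_separation (x := (z.1.1, z.2.1, z.1.2.1 - z.2.2.1)) hsep).comp z
      (f := fun z => (z.1.1, z.2.1, z.1.2.1 - z.2.2.1)) (by fun_prop)
  have hdist' : ContDiffAt ℝ n (fun z : PairState × PairState =>
      separation z.1.1 z.2.1 (-(z.1.2.1 - z.2.2.1))) z :=
    (contDiffAt_separation (x := (z.1.1, z.2.1, -(z.1.2.1 - z.2.2.1))) hsep').comp z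
      (f := fun z => (z.1.1, z.2.1, -(z.1.2.1 - z.2.2.1))) (by fun_prop)
  have hcube := pow_ne_zero 3 hsep
  have hcube' := pow_ne_zero 3 hsep'
  have hsq : 4 * z.1.1 ^ 2 ≠ 0 := by positivity
  unfold pairField radialAcc angularAcc
  fun_prop (disch := assumption)

end PhaseSpace

section PairMotion

/-- A pair of bodies of mass `m` with polar coordinates `(r, φ)` and `(r, φ + π)` obeys the reduced
equations of motion, without collisions, in the field of a pair of bodies of mass `M` with radius
`s` and angle `ψ`. Of the two distances between the pairs, only `separation r s (φ - ψ)` is required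
to be nonzero here; the other one is the separation seen from the other pair. -/
structure IsPairMotion (m M : ℝ) (r φ s ψ : ℝ → ℝ) : Prop where
  differentiable_radius : Differentiable ℝ r
  differentiable_angle : Differentiable ℝ φ
  differentiable_deriv_radius : Differentiable ℝ (deriv r)
  differentiable_deriv_angle : Differentiable ℝ (deriv φ)
  radius_ne_zero : ∀ t, r t ≠ 0
  separation_ne_zero : ∀ t, separation (r t) (s t) (φ t - ψ t) ≠ 0
  deriv_deriv_radius : ∀ t,
    deriv (deriv r) t = radialAcc m M (r t) (s t) (φ t - ψ t) (deriv φ t)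
  deriv_deriv_angle : ∀ t,
    deriv (deriv φ) t = angularAcc M (r t) (s t) (φ t - ψ t) (deriv r t) (deriv φ t)

/-- The curve in `PairState` traced by a pair with radius `r` and angle `φ`. -/
noncomputable def pairState (r φ : ℝ → ℝ) (t : ℝ) : PairState := (r t, φ t, deriv r t, deriv φ t)

variable {m₁ m₂ : ℝ} {r₁ θ r₂ β : ℝ → ℝ}

theorem IsPairMotion.hasDerivAt_pairState (h : IsPairMotion m₁ m₂ r₁ θ r₂ β) (t : ℝ) :
    HasDerivAt (pairState r₁ θ) (pairField m₁ m₂ (pairState r₁ θ t) (pairState r₂ β t)) t := by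
  have hr := (h.differentiable_deriv_radius t).hasDerivAt
  have hφ := (h.differentiable_deriv_angle t).hasDerivAt
  rw [h.deriv_deriv_radius t] at hr
  rw [h.deriv_deriv_angle t] at hφ
  exact (h.differentiable_radius t).hasDerivAt.prodMk
    ((h.differentiable_angle t).hasDerivAt.prodMk (hr.prodMk hφ))

theorem IsPairMotion.separation_neg_ne_zero (h : IsPairMotion m₂ m₁ r₂ β r₁ θ) (t : ℝ) :
    separation (r₁ t) (r₂ t) (-(θ t - β t)) ≠ 0 := by
  rw [neg_sub, separation_comm]
  exact h.separation_ne_zero t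

theorem contDiffAt_twoPairField (h₁ : IsPairMotion m₁ m₂ r₁ θ r₂ β)
    (h₂ : IsPairMotion m₂ m₁ r₂ β r₁ θ) (t : ℝ) {n : WithTop ℕ∞} :
    ContDiffAt ℝ n (twoPairField m₁ m₂) (pairState r₁ θ t, pairState r₂ β t) :=
  have hfst := contDiffAt_pairField m₁ m₂ (z := (pairState r₁ θ t, pairState r₂ β t))
    (h₁.radius_ne_zero t) (h₁.separation_ne_zero t) (h₂.separation_neg_ne_zero t)
  have hsnd := contDiffAt_pairField m₂ m₁ (z := (pairState r₂ β t, pairState r₁ θ t))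
    (h₂.radius_ne_zero t) (h₂.separation_ne_zero t) (h₁.separation_neg_ne_zero t)
  hfst.prodMk (hsnd.comp (pairState r₁ θ t, pairState r₂ β t)
    (contDiffAt_snd.prodMk contDiffAt_fst))

theorem pairState_add_period (h₁ : IsPairMotion m₁ m₂ r₁ θ r₂ β)
    (h₂ : IsPairMotion m₂ m₁ r₂ β r₁ θ) {c c' t₀ T : ℝ} {n : ℤ} (hc : c - c' = n * π)
    (hT₁ : pairState r₁ θ (t₀ + T) = pairState r₁ θ t₀ + angleShift c)
    (hT₂ : pairState r₂ β (t₀ + T) = pairState r₂ β t₀ + angleShift c') (t : ℝ) :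
    pairState r₁ θ (t + T) = pairState r₁ θ t + angleShift c ∧
      pairState r₂ β (t + T) = pairState r₂ β t + angleShift c' :=
  Prod.ext_iff.1 <| integralCurve_add_period_of_periodic
    (f := fun t => (pairState r₁ θ t, pairState r₂ β t)) (twoPairField_periodic m₁ m₂ hc)
    (fun t => (contDiffAt_twoPairField h₁ h₂ t).exists_lipschitzOnWith)
    (fun t => (h₁.hasDerivAt_pairState t).prodMk (h₂.hasDerivAt_pairState t))
    (Prod.ext hT₁ hT₂) t

theorem pairState_add_eq_iff {r φ : ℝ → ℝ} {c t T : ℝ} :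
    pairState r φ (t + T) = pairState r φ t + angleShift c ↔
      r (t + T) = r t ∧ φ (t + T) = φ t + c ∧
        deriv r (t + T) = deriv r t ∧ deriv φ (t + T) = deriv φ t := by
  simp [pairState, angleShift]

end PairMotion

section Bodies

/-- The point of the plane with polar coordinates `(r, φ)`. -/
noncomputable def polarVec (r φ : ℝ) : EuclideanSpace ℝ (Fin 2) := vec2 (r * cos φ) (r * sin φ)

/-- The rotation of the plane by the angle `α` about the origin, in coordinates. -/
noncomputable def planeRotation (α : ℝ) (v : EuclideanSpace ℝ (Fin 2)) :
    EuclideanSpace ℝ (Fin 2) :=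
  vec2 (cos α * v 0 - sin α * v 1) (sin α * v 0 + cos α * v 1)

/-- The positions at time `t` of the four bodies of the two-pair ansatz. -/
noncomputable def twoPairBodies (r₁ θ r₂ β : ℝ → ℝ) (t : ℝ) : Fin 4 → EuclideanSpace ℝ (Fin 2) :=
  ![polarVec (r₁ t) (θ t), -polarVec (r₁ t) (θ t),
    polarVec (r₂ t) (β t + π / 2), -polarVec (r₂ t) (β t + π / 2)]

theorem neg_vec2 (x y : ℝ) : -vec2 x y = vec2 (-x) (-y) := by
  ext i
  fin_cases i <;> rfl

theorem planeRotation_polarVec (α r φ : ℝ) :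
    planeRotation α (polarVec r φ) = polarVec r (φ + α) := by
  have hcos : cos α * (r * cos φ) - sin α * (r * sin φ) = r * cos (φ + α) := by
    rw [cos_add]; ring
  have hsin : sin α * (r * cos φ) + cos α * (r * sin φ) = r * sin (φ + α) := by
    rw [sin_add]; ring
  exact congrArg₂ vec2 hcos hsin

theorem polarVec_sub_pi (r φ : ℝ) : polarVec r (φ - π) = -polarVec r φ := by
  rw [polarVec, polarVec, cos_sub_pi, sin_sub_pi, mul_neg, mul_neg, neg_vec2]

theorem planeRotation_neg (α : ℝ) (v : EuclideanSpace ℝ (Fin 2)) :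
    planeRotation α (-v) = -planeRotation α v := by
  rw [planeRotation, planeRotation, neg_vec2, PiLp.neg_apply, PiLp.neg_apply]
  congr 1 <;> ring

theorem twoPairBodies_eq_planeRotation_swap {r₁ θ r₂ β : ℝ → ℝ} {α t t' : ℝ}
    (hr₁ : r₁ t' = r₁ t) (hr₂ : r₂ t' = r₂ t)
    (hθ : θ t' = θ t + α) (hβ : β t' = β t + α - π) (i : Fin 4) :
    twoPairBodies r₁ θ r₂ β t' i =
      planeRotation α (twoPairBodies r₁ θ r₂ β t (Equiv.swap 2 3 i)) := by
  have hpair₁ : polarVec (r₁ t') (θ t') = planeRotation α (polarVec (r₁ t) (θ t)) := by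
    rw [planeRotation_polarVec, hr₁, hθ]
  have hpair₂ : polarVec (r₂ t') (β t' + π / 2)
      = -planeRotation α (polarVec (r₂ t) (β t + π / 2)) := by
    rw [planeRotation_polarVec, ← polarVec_sub_pi, hr₂, hβ]
    congr 1
    ring
  fin_cases i
  · exact hpair₁
  · exact (congrArg Neg.neg hpair₁).trans (planeRotation_neg _ _).symm
  · exact hpair₂.trans (planeRotation_neg _ _).symm
  · exact (congrArg Neg.neg hpair₂).trans (neg_neg _)

end Bodies

theorem four_body_periodic_up_to_rotation_general {m₁ m₂ : ℝ} {r₁ θ r₂ β : ℝ → ℝ}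
    (h₁ : IsPairMotion m₁ m₂ r₁ θ r₂ β) (h₂ : IsPairMotion m₂ m₁ r₂ β r₁ θ) {T : ℝ}
    (hr₁ : r₁ T = r₁ 0) (hr₂ : r₂ T = r₂ 0)
    (hr₁' : deriv r₁ T = deriv r₁ 0) (hr₂' : deriv r₂ T = deriv r₂ 0)
    (hθ' : deriv θ T = deriv θ 0) (hβ' : deriv β T = deriv β 0)
    (hδ : θ T - β T = θ 0 - β 0 + π) :
    (∀ t, r₁ (t + T) = r₁ t ∧ r₂ (t + T) = r₂ t ∧
      θ (t + T) = θ t + (θ T - θ 0) ∧ β (t + T) = β t + (θ T - θ 0) - π) ∧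
    ∀ t i, twoPairBodies r₁ θ r₂ β (t + T) i =
      planeRotation (θ T - θ 0) (twoPairBodies r₁ θ r₂ β t (Equiv.swap 2 3 i)) := by
  have hc : (θ T - θ 0) - (θ T - θ 0 - π) = (1 : ℤ) * π := by push_cast; ring
  have hT₁ : pairState r₁ θ (0 + T) = pairState r₁ θ 0 + angleShift (θ T - θ 0) := by
    rw [pairState_add_eq_iff, zero_add]
    exact ⟨hr₁, by ring, hr₁', hθ'⟩
  have hT₂ : pairState r₂ β (0 + T) = pairState r₂ β 0 + angleShift (θ T - θ 0 - π) := by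
    rw [pairState_add_eq_iff, zero_add]
    exact ⟨hr₂, by linarith, hr₂', hβ'⟩
  have hper (t : ℝ) : r₁ (t + T) = r₁ t ∧ r₂ (t + T) = r₂ t ∧
      θ (t + T) = θ t + (θ T - θ 0) ∧ β (t + T) = β t + (θ T - θ 0) - π := by
    obtain ⟨hpair₁, hpair₂⟩ := pairState_add_period h₁ h₂ hc hT₁ hT₂ t
    obtain ⟨hr₁t, hθt, -⟩ := pairState_add_eq_iff.1 hpair₁
    obtain ⟨hr₂t, hβt, -⟩ := pairState_add_eq_iff.1 hpair₂
    exact ⟨hr₁t, hr₂t, hθt, hβt.trans (add_sub_assoc _ _ _).symm⟩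
  refine ⟨hper, fun t => ?_⟩
  obtain ⟨hr₁t, hr₂t, hθt, hβt⟩ := hper t
  exact twoPairBodies_eq_planeRotation_swap hr₁t hr₂t hθt hβt

/-- A solution of the reduced 4-body system whose return conditions hold at
time `T` is periodic up to a rotation by `θ T` and the exchange of bodies 3
and 4. -/
theorem four_body_periodic_up_to_rotation
    (m2 : ℝ) (hm2 : 0 < m2)
    (x1 x2 : ℝ) (hx1 : 0 < x1) (hx2 : 0 < x2) (x3 x4 : ℝ)
    (r1 r2 θ β : ℝ → ℝ)
    (hr1pos : ∀ t, 0 < r1 t) (hr2pos : ∀ t, 0 < r2 t)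
    (hr1d : Differentiable ℝ r1) (hr1d2 : Differentiable ℝ (deriv r1))
    (hr2d : Differentiable ℝ r2) (hr2d2 : Differentiable ℝ (deriv r2))
    (hθd : Differentiable ℝ θ) (hθd2 : Differentiable ℝ (deriv θ))
    (hβd : Differentiable ℝ β) (hβd2 : Differentiable ℝ (deriv β))
    (δ d1 d2 : ℝ → ℝ)
    (hδ : ∀ t, δ t = θ t - β t)
    (hd1 : ∀ t, d1 t = Real.sqrt ((r1 t)^2 + (r2 t)^2 - 2 * r1 t * r2 t * Real.sin (δ t)))
    (hd2 : ∀ t, d2 t = Real.sqrt ((r1 t)^2 + (r2 t)^2 + 2 * r1 t * r2 t * Real.sin (δ t)))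
    (hd1pos : ∀ t, 0 < d1 t) (hd2pos : ∀ t, 0 < d2 t)
    (hODE : ∀ t : ℝ,
      deriv (deriv r1) t =
          r1 t * (deriv θ t)^2 - 1 / (4 * (r1 t)^2)
          + m2 * ((r2 t * Real.sin (δ t) - r1 t) / (d1 t)^3
                + (-(r2 t * Real.sin (δ t)) - r1 t) / (d2 t)^3)
      ∧ deriv (deriv θ) t =
          (m2 * r2 t * Real.cos (δ t) * (1/(d1 t)^3 - 1/(d2 t)^3)
            - 2 * deriv r1 t * deriv θ t) / r1 t
      ∧ deriv (deriv r2) t =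
          r2 t * (deriv β t)^2 - m2 / (4 * (r2 t)^2)
          + ((r1 t * Real.sin (δ t) - r2 t) / (d1 t)^3
            + (-(r1 t * Real.sin (δ t)) - r2 t) / (d2 t)^3)
      ∧ deriv (deriv β) t =
          (r1 t * Real.cos (δ t) * (1/(d2 t)^3 - 1/(d1 t)^3)
            - 2 * deriv r2 t * deriv β t) / r2 t)
    (hinit1 : r1 0 = x1) (hinit2 : r2 0 = x2)
    (hinit3 : θ 0 = 0) (hinit4 : β 0 = 0)
    (hinit5 : deriv r1 0 = 0) (hinit6 : deriv r2 0 = 0)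
    (hinit7 : deriv θ 0 = x3) (hinit8 : deriv β 0 = x4)
    (T : ℝ) (hT : 0 < T)
    (hret1 : r1 T = x1) (hret2 : r2 T = x2)
    (hret3 : deriv r1 T = 0) (hret4 : deriv r2 T = 0)
    (hret5 : deriv θ T = x3) (hret6 : deriv β T = x4)
    (hret7 : θ T - β T = π)
    (bodies : Fin 4 → ℝ → EuclideanSpace ℝ (Fin 2))
    (hb0 : ∀ t, bodies 0 t = vec2 (r1 t * Real.cos (θ t)) (r1 t * Real.sin (θ t)))
    (hb1 : ∀ t, bodies 1 t = -(bodies 0 t))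
    (hb2 : ∀ t, bodies 2 t =
      vec2 (r2 t * Real.cos (β t + π/2)) (r2 t * Real.sin (β t + π/2)))
    (hb3 : ∀ t, bodies 3 t = -(bodies 2 t))
    (R : EuclideanSpace ℝ (Fin 2) → EuclideanSpace ℝ (Fin 2))
    (hR : ∀ v, R v = vec2 (Real.cos (θ T) * v 0 - Real.sin (θ T) * v 1)
                          (Real.sin (θ T) * v 0 + Real.cos (θ T) * v 1)) :
    (∀ t : ℝ, r1 (t + T) = r1 t ∧ r2 (t + T) = r2 t
        ∧ θ (t + T) = θ t + θ T ∧ β (t + T) = β t + θ T - π)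
    ∧ (∀ t : ℝ, bodies 0 (t + T) = R (bodies 0 t)
        ∧ bodies 1 (t + T) = R (bodies 1 t)
        ∧ bodies 2 (t + T) = R (bodies 3 t)
        ∧ bodies 3 (t + T) = R (bodies 2 t)) := by
  obtain rfl := funext hδ
  obtain rfl := funext hd1
  obtain rfl := funext hd2
  obtain rfl : R = planeRotation (θ T) := funext hR
  simp only [← separation_neg] at hd2pos hODE
  have h₁ : IsPairMotion 1 m2 r1 θ r2 β :=
    ⟨hr1d, hθd, hr1d2, hθd2, fun t => (hr1pos t).ne', fun t => (hd1pos t).ne',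
      fun t => (hODE t).1, fun t => (hODE t).2.1⟩
  have h₂ : IsPairMotion m2 1 r2 β r1 θ := by
    refine ⟨hr2d, hβd, hr2d2, hβd2, fun t => (hr2pos t).ne', fun t => ?_, fun t => ?_, fun t => ?_⟩
    · rw [← neg_sub, separation_comm]
      exact (hd2pos t).ne'
    · rw [← neg_sub, radialAcc_swap_neg, one_mul]
      exact (hODE t).2.2.1
    · rw [← neg_sub, angularAcc_swap_neg, one_mul]
      exact (hODE t).2.2.2
  have hbodies (t : ℝ) (i : Fin 4) : bodies i t = twoPairBodies r1 θ r2 β t i := by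
    fin_cases i <;> simp [hb0, hb1, hb2, hb3, twoPairBodies, polarVec]
  have h := four_body_periodic_up_to_rotation_general h₁ h₂ (hret1.trans hinit1.symm)
    (hret2.trans hinit2.symm) (hret3.trans hinit5.symm) (hret4.trans hinit6.symm)
    (hret5.trans hinit7.symm) (hret6.trans hinit8.symm)
    (by rw [hret7, hinit3, hinit4, sub_zero, zero_add])
  simp only [hinit3, sub_zero, ← hbodies] at h
  exact ⟨h.1, fun t => ⟨h.2 t 0, h.2 t 1, h.2 t 2, h.2 t 3⟩⟩
end

section
/- Let (r1, r2, θ, β) be a solution on ℝ of the reduced 6-body system θ̈ = (m2 B1 − 2 ṙ1 θ̇)/r1, r̈1 = r1 θ̇² − 1/(√3 r1²) + m2 A1, β̈ = (B2 − 2 ṙ2 β̇)/r2, r̈2 = r2 β̇² + A2 − m2/(√3 r2²), with r1(t), r2(t) > 0 and d1(t), d2(t), d3(t) > 0 for all t, satisfying the initial conditions r1(0) = x1, r2(0) = x2, θ(0) = 0, β(0) = 0, ṙ1(0) = 0, ṙ2(0) = 0, θ̇(0) = x3, β̇(0) = x4. Suppose there is T > 0 such that r1(T) = x1, r2(T) =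 x2, ṙ1(T) = 0, ṙ2(T) = 0, θ̇(T) = x3, β̇(T) = x4, and θ(T) − β(T) = 2π/3. Then for all t ∈ ℝ: r1(t+T) = r1(t), r2(t+T) = r2(t), θ(t+T) = θ(t) + θ(T), β(t+T) = β(t) + θ(T) − 2π/3. Consequently, if R denotes the rotation of the plane by angle θ(T), the bodies of the two-triangle ansatz satisfy r⃗k(t+T) = R r⃗k(t) for k = 1,2,3, and r⃗4(t+T) = R r⃗6(t), r⃗5(t+T) = R r⃗4(t), r⃗6(t+T) = R r⃗5(t); i.e., the solution is periodic up to a rotation and a cyclic relabeling of bodies 4, 5, 6. -/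
open Real

/-!
In polar coordinates for one vertex of each triangle, the equations of motion form an autonomous
first-order system that depends on the two polar angles only through their difference `φ`. The
force exerted by a triangle is a sum over its three vertices of a `2π`-periodic function of the
relative angle, so it is unchanged when `φ` is shifted by a multiple of `2π/3`. Hence translating
the angles by `α` and by `α - n * (2π/3)` is a symmetry of the system. The return condition says
that the state at time `T` is such a translate of the state at time `0`, and uniqueness for initial
value problems propagates this to all times. A shift by `2π/3` relabels the vertices cyclically.
-/

section

open Function Filter Topology Finset

section IntegralCurve

variable {E : Type*} [NormedAddCommGroup E] [NormedSpace ℝ E] {γ γ' : ℝ → E} {v : ℝ → E → E}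

theorem eq_of_isIntegralCurve_of_lipschitzOnWith
    (hv : ∀ t, ∃ K, ∃ s ∈ 𝓝 (γ t), ∀ᶠ t' in 𝓝 t, LipschitzOnWith K (v t') s)
    (hγ : IsIntegralCurve γ v) (hγ' : IsIntegralCurve γ' v) {t₀ : ℝ} (h₀ : γ t₀ = γ' t₀) :
    γ = γ' := by
  have isOpen_eqLocus : IsOpen {t | γ t = γ' t} := by
    refine isOpen_iff_mem_nhds.2 fun t (ht : γ t = γ' t) ↦ ?_
    obtain ⟨K, s, hs, hK⟩ := hv t
    have hγs : ∀ᶠ t' in 𝓝 t, γ t' ∈ s := hγ.continuous.continuousAt hs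
    have hγ's : ∀ᶠ t' in 𝓝 t, γ' t' ∈ s := hγ'.continuous.continuousAt (ht ▸ hs)
    exact ODE_solution_unique_of_eventually hK (hγs.mono fun t' h ↦ ⟨hγ t', h⟩)
      (hγ's.mono fun t' h ↦ ⟨hγ' t', h⟩) ht
  have isClopen_eqLocus : IsClopen {t | γ t = γ' t} :=
    ⟨isClosed_eq hγ.continuous hγ'.continuous, isOpen_eqLocus⟩
  exact funext (Set.eq_univ_iff_forall.1 (isClopen_eqLocus.eq_univ ⟨t₀, h₀⟩))

theorem add_eq_add_of_isIntegralCurve_of_lipschitzOnWith {T : ℝ} {c : E}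
    (hc : ∀ t x, v (t + T) (x + c) = v t x)
    (hv : ∀ t, ∃ K, ∃ s ∈ 𝓝 (γ t), ∀ᶠ t' in 𝓝 t, LipschitzOnWith K (v t') s)
    (hγ : IsIntegralCurve γ v) {t₀ : ℝ} (h₀ : γ (t₀ + T) = γ t₀ + c) (t : ℝ) :
    γ (t + T) = γ t + c := by
  have isIntegralCurve_translate : IsIntegralCurve (fun t ↦ γ (t + T) - c) v := fun t ↦ by
    have h := ((hγ (t + T)).comp_add_const t T).sub_const c
    rwa [← hc t, sub_add_cancel]
  have h := eq_of_isIntegralCurve_of_lipschitzOnWith hv hγ isIntegralCurve_translate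
    (eq_sub_of_add_eq h₀.symm)
  exact (eq_sub_iff_add_eq.1 (congrFun h t)).symm

end IntegralCurve

theorem periodic_sum_range_add_nsmul {A M : Type*} [AddCommMonoid A] [AddCommMonoid M] {f : A → M}
    {c : A} {n : ℕ} (hf : Periodic f (n • c)) :
    Periodic (fun x ↦ ∑ k ∈ range n, f (x + k • c)) c := by
  intro x
  cases n with
  | zero => simp
  | succ n =>
    have wrap : f (x + c + n • c) = f (x + 0 • c) := by
      rw [add_assoc, ← succ_nsmul', hf, zero_nsmul, add_zero]
    dsimp only
    rw [sum_range_succ, sum_range_succ', wrap]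
    simp only [add_assoc, succ_nsmul']

namespace TwoTriangle

/-- The distance between two points with polar radii `a` and `b` whose polar angles differ by `ψ`,
by the law of cosines. -/
noncomputable def separation (a b ψ : ℝ) : ℝ := √(a ^ 2 - 2 * a * b * cos ψ + b ^ 2)

/-- The radial and tangential components, at a point of polar radius `a`, of the gravitational
attraction of a unit mass at polar radius `b` and relative polar angle `ψ`. -/
noncomputable def attraction (a b ψ : ℝ) : ℝ × ℝ :=
  ((-a + b * cos ψ) / separation a b ψ ^ 3, b * sin ψ / separation a b ψ ^ 3)

/-- The sum of `f` over the relative angles of the three vertices of an equilateral triangle, one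
of which is at relative angle `ψ`. -/
noncomputable def vertexSum (f : ℝ → ℝ × ℝ) (ψ : ℝ) : ℝ × ℝ :=
  ∑ k ∈ range 3, f (ψ + k • (2 * π / 3))

/-- The second derivative of the polar coordinates `x = (r, φ)` of a vertex of an equilateral
triangle with vertex masses `m` centred at the origin, given the velocity `v = (r', φ')` and the
polar components `F` of the acceleration due to all other bodies. The term `m / (√3 * r ^ 2)` is
the attraction of the other two vertices of the triangle. -/
noncomputable def polarAcceleration (m : ℝ) (x v F : ℝ × ℝ) : ℝ × ℝ :=
  (x.1 * v.2 ^ 2 - m / (√3 * x.1 ^ 2) + F.1, (F.2 - 2 * v.1 * v.2) / x.1)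

/-- The vector field of the reduced six-body system on states `((x, y), (v, w))`, where `x` and `y`
are polar coordinates of one vertex of each triangle and `v`, `w` their derivatives. The vertices
of the triangles have masses `m₁` and `m₂`. -/
noncomputable def vectorField (m₁ m₂ : ℝ) (p : ((ℝ × ℝ) × (ℝ × ℝ)) × ((ℝ × ℝ) × (ℝ × ℝ))) :
    ((ℝ × ℝ) × (ℝ × ℝ)) × ((ℝ × ℝ) × (ℝ × ℝ)) :=
  let x := p.1.1
  let y := p.1.2
  (p.2,
    (polarAcceleration m₁ x p.2.1 (m₂ • vertexSum (attraction x.1 y.1) (y.2 - x.2)),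
      polarAcceleration m₂ y p.2.2
        (m₁ • vertexSum (fun ψ ↦ attraction y.1 x.1 (-ψ)) (y.2 - x.2))))

/-- A collision-free motion of two equilateral triangles centred at the origin, with vertex masses
`m₁` and `m₂`: `x` and `y` are polar coordinates of one vertex of each, and `v`, `w` their
derivatives. -/
structure IsMotion (m₁ m₂ : ℝ) (x y v w : ℝ → ℝ × ℝ) : Prop where
  isIntegralCurve : IsIntegralCurve (fun t ↦ ((x t, y t), (v t, w t))) fun _ ↦ vectorField m₁ m₂
  radius_pos : ∀ t, 0 < (x t).1 ∧ 0 < (y t).1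
  separation_ne_zero : ∀ t, ∀ k < 3,
    separation (x t).1 (y t).1 ((y t).2 - (x t).2 + k • (2 * π / 3)) ≠ 0

/-- The `k`-th vertex of the equilateral triangle centred at the origin whose `0`-th vertex has
polar coordinates `x`. -/
noncomputable def vertex (x : ℝ × ℝ) (k : ℤ) : EuclideanSpace ℝ (Fin 2) :=
  vec2 (x.1 * cos (x.2 + k * (2 * π / 3))) (x.1 * sin (x.2 + k * (2 * π / 3)))

/-- The rotation of the plane by the angle `α` about the origin. -/
noncomputable def rotation (α : ℝ) (z : EuclideanSpace ℝ (Fin 2)) : EuclideanSpace ℝ (Fin 2) :=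
  vec2 (cos α * z 0 - sin α * z 1) (sin α * z 0 + cos α * z 1)

theorem separation_neg_comm (a b ψ : ℝ) : separation b a (-ψ) = separation a b ψ := by
  simp only [separation, cos_neg]
  ring_nf

theorem separation_periodic (a b : ℝ) : Periodic (separation a b) (2 * π) := fun ψ ↦ by
  simp only [separation, cos_add_two_pi]

theorem attraction_periodic (a b : ℝ) : Periodic (attraction a b) (2 * π) := fun ψ ↦ by
  simp only [attraction, separation_periodic a b ψ, cos_add_two_pi, sin_add_two_pi]

theorem attraction_neg_periodic (a b : ℝ) : Periodic (fun ψ ↦ attraction a b (-ψ)) (2 * π) :=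
  fun ψ ↦ by simp only [neg_add', (attraction_periodic a b).sub_eq]

theorem vertexSum_periodic {f : ℝ → ℝ × ℝ} (hf : Periodic f (2 * π)) :
    Periodic (vertexSum f) (2 * π / 3) :=
  periodic_sum_range_add_nsmul (by
    simpa only [nsmul_eq_mul, Nat.cast_ofNat, mul_div_cancel₀ (2 * π) three_ne_zero] using hf)

theorem vectorField_periodic (m₁ m₂ α : ℝ) (n : ℤ) :
    Periodic (vectorField m₁ m₂) (((0, α), (0, α - n * (2 * π / 3))), 0) := by
  rintro ⟨⟨⟨a, φ⟩, b, χ⟩, v, w⟩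
  have angle_shift : χ + (α - n * (2 * π / 3)) - (φ + α) = χ - φ - n * (2 * π / 3) := by ring
  have inner := (vertexSum_periodic (attraction_periodic a b)).sub_int_mul_eq n (x := χ - φ)
  have outer := (vertexSum_periodic (attraction_neg_periodic b a)).sub_int_mul_eq n (x := χ - φ)
  simp only [vectorField, polarAcceleration, Prod.mk_add_mk, add_zero, angle_shift, inner, outer]

section Smooth

variable {E : Type*} [NormedAddCommGroup E] [NormedSpace ℝ E] {N : WithTop ℕ∞} {p : E}

theorem contDiffAt_attraction {a b ψ : E → ℝ} (ha : ContDiffAt ℝ N a p) (hb : ContDiffAt ℝ N b p)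
    (hψ : ContDiffAt ℝ N ψ p) (h : separation (a p) (b p) (ψ p) ≠ 0) :
    ContDiffAt ℝ N (fun q ↦ attraction (a q) (b q) (ψ q)) p := by
  have separation_cubed : ContDiffAt ℝ N (fun q ↦ separation (a q) (b q) (ψ q) ^ 3) p :=
    (ContDiffAt.sqrt (by fun_prop) fun h₀ ↦ h (by rw [separation, h₀, sqrt_zero])).pow 3
  have h3 : separation (a p) (b p) (ψ p) ^ 3 ≠ 0 := pow_ne_zero 3 h
  exact (ContDiffAt.div (by fun_prop) separation_cubed h3).prodMk
    (ContDiffAt.div (by fun_prop) separation_cubed h3)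

theorem contDiffAt_vertexSum {f : E → ℝ → ℝ × ℝ} {ψ : E → ℝ}
    (hf : ∀ k < 3, ContDiffAt ℝ N (fun q ↦ f q (ψ q + k • (2 * π / 3))) p) :
    ContDiffAt ℝ N (fun q ↦ vertexSum (f q) (ψ q)) p :=
  ContDiffAt.sum fun k hk ↦ hf k (mem_range.1 hk)

theorem contDiffAt_polarAcceleration (m : ℝ) {x v F : E → ℝ × ℝ} (hx : ContDiffAt ℝ N x p)
    (hv : ContDiffAt ℝ N v p) (hF : ContDiffAt ℝ N F p) (h : (x p).1 ≠ 0) :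
    ContDiffAt ℝ N (fun q ↦ polarAcceleration m (x q) (v q) (F q)) p := by
  have self_attraction : ContDiffAt ℝ N (fun q ↦ m / (√3 * (x q).1 ^ 2)) p :=
    ContDiffAt.div (by fun_prop) (by fun_prop) (by positivity)
  exact ContDiffAt.prodMk (by fun_prop) (ContDiffAt.div (by fun_prop) (by fun_prop) h)

end Smooth

theorem contDiffAt_vectorField (m₁ m₂ : ℝ) {N : WithTop ℕ∞} {x y v w : ℝ × ℝ} (hx : x.1 ≠ 0)
    (hy : y.1 ≠ 0) (h : ∀ k < 3, separation x.1 y.1 (y.2 - x.2 + k • (2 * π / 3)) ≠ 0) :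
    ContDiffAt ℝ N (vectorField m₁ m₂) ((x, y), (v, w)) := by
  refine ContDiffAt.prodMk (by fun_prop) (ContDiffAt.prodMk ?_ ?_)
  · refine contDiffAt_polarAcceleration m₁ (by fun_prop) (by fun_prop)
      (ContDiffAt.fun_smul contDiffAt_const (contDiffAt_vertexSum fun k hk ↦ ?_)) hx
    exact contDiffAt_attraction (by fun_prop) (by fun_prop) (by fun_prop) (h k hk)
  · refine contDiffAt_polarAcceleration m₂ (by fun_prop) (by fun_prop)
      (ContDiffAt.fun_smul contDiffAt_const (contDiffAt_vertexSum fun k hk ↦ ?_)) hy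
    exact contDiffAt_attraction (by fun_prop) (by fun_prop) (by fun_prop)
      ((separation_neg_comm ..).trans_ne (h k hk))

theorem rotation_vertex (x : ℝ × ℝ) (α : ℝ) (k : ℤ) :
    rotation α (vertex x k) = vertex (x + (0, α)) k := by
  have angle : x.2 + α + k * (2 * π / 3) = α + (x.2 + k * (2 * π / 3)) := by ring
  simp only [rotation, vertex, Prod.fst_add, Prod.snd_add, add_zero, angle, cos_add α, sin_add α]
  congr 1 <;> simp [vec2] <;> ring

theorem vertex_sub_int (x : ℝ × ℝ) (k n : ℤ) :
    vertex x (k - n) = vertex (x - (0, n * (2 * π / 3))) k := by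
  simp only [vertex, Prod.fst_sub, Prod.snd_sub, sub_zero, Int.cast_sub]
  ring_nf

theorem vertex_add_three (x : ℝ × ℝ) (k : ℤ) : vertex x (k + 3) = vertex x k := by
  have angle : x.2 + ((k + 3 : ℤ) : ℝ) * (2 * π / 3) = x.2 + k * (2 * π / 3) + 2 * π := by
    push_cast; ring
  simp only [vertex, angle, cos_add_two_pi, sin_add_two_pi]

theorem vertex_zero (r φ : ℝ) : vertex (r, φ) 0 = vec2 (r * cos φ) (r * sin φ) := by
  simp only [vertex, Int.cast_zero, zero_mul, add_zero]

theorem vertex_one (r φ : ℝ) :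
    vertex (r, φ) 1 = vec2 (r * cos (φ + 2 * π / 3)) (r * sin (φ + 2 * π / 3)) := by
  simp only [vertex, Int.cast_one, one_mul]

theorem vertex_two (r φ : ℝ) :
    vertex (r, φ) 2 = vec2 (r * cos (φ + 4 * π / 3)) (r * sin (φ + 4 * π / 3)) := by
  have angle : ((2 : ℤ) : ℝ) * (2 * π / 3) = 4 * π / 3 := by push_cast; ring
  simp only [vertex, angle]

section ExplicitForces

-- In the ansatz, the first vertex of the second triangle has polar angle `β + π / 3`, hence angle
-- `π / 3 - δ` relative to the first vertex of the first triangle.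

theorem cos_pi_div_three_sub (δ : ℝ) : cos (π / 3 - δ) = sin (π / 6 + δ) := by
  rw [← sin_pi_div_two_sub]; ring_nf

theorem sin_pi_div_three_sub (δ : ℝ) : sin (π / 3 - δ) = cos (π / 6 + δ) := by
  rw [← cos_pi_div_two_sub]; ring_nf

theorem cos_pi_div_three_add (δ : ℝ) : cos (π / 3 + δ) = sin (π / 6 - δ) := by
  rw [← sin_pi_div_two_sub]; ring_nf

theorem sin_pi_div_three_add (δ : ℝ) : sin (π / 3 + δ) = cos (π / 6 - δ) := by
  rw [← cos_pi_div_two_sub]; ring_nf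

theorem pi_div_three_sub_add_one_nsmul (δ : ℝ) : π / 3 - δ + 1 • (2 * π / 3) = π - δ := by
  rw [one_nsmul]; ring

theorem pi_div_three_sub_add_two_nsmul (δ : ℝ) :
    π / 3 - δ + 2 • (2 * π / 3) = -(π / 3 + δ) + 2 * π := by
  rw [two_nsmul]; ring

theorem vertexSum_pi_div_three_sub {f : ℝ → ℝ × ℝ} (hf : Periodic f (2 * π)) (δ : ℝ) :
    vertexSum f (π / 3 - δ) = f (π / 3 - δ) + f (π - δ) + f (-(π / 3 + δ)) := by
  simp only [vertexSum, sum_range_succ, sum_range_zero, zero_add, zero_nsmul, add_zero,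
    pi_div_three_sub_add_one_nsmul, pi_div_three_sub_add_two_nsmul, hf _]

variable {a b δ d₁ d₂ d₃ : ℝ}
  (hd₁ : d₁ = √(a ^ 2 - 2 * a * b * sin (π / 6 + δ) + b ^ 2))
  (hd₂ : d₂ = √(a ^ 2 + 2 * a * b * cos δ + b ^ 2))
  (hd₃ : d₃ = √(a ^ 2 - 2 * a * b * sin (π / 6 - δ) + b ^ 2))

include hd₁ in
theorem separation_pi_div_three_sub : separation a b (π / 3 - δ) = d₁ := by
  rw [separation, cos_pi_div_three_sub, hd₁]

include hd₂ in
theorem separation_pi_sub : separation a b (π - δ) = d₂ := by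
  rw [separation, cos_pi_sub, hd₂, mul_neg, sub_neg_eq_add]

include hd₃ in
theorem separation_neg_pi_div_three_add : separation a b (-(π / 3 + δ)) = d₃ := by
  rw [separation, cos_neg, cos_pi_div_three_add, hd₃]

include hd₁ hd₂ hd₃

theorem separation_vertex_ne_zero (h₁ : 0 < d₁) (h₂ : 0 < d₂) (h₃ : 0 < d₃) :
    ∀ k < 3, separation a b (π / 3 - δ + k • (2 * π / 3)) ≠ 0 := by
  intro k hk
  interval_cases k
  · rw [zero_nsmul, add_zero, separation_pi_div_three_sub hd₁]
    exact h₁.ne'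
  · rw [pi_div_three_sub_add_one_nsmul, separation_pi_sub hd₂]
    exact h₂.ne'
  · rw [pi_div_three_sub_add_two_nsmul, separation_periodic, separation_neg_pi_div_three_add hd₃]
    exact h₃.ne'

theorem vertexSum_attraction_inner :
    vertexSum (attraction a b) (π / 3 - δ) =
      ((-a + b * sin (π / 6 + δ)) / d₁ ^ 3 + (-a - b * cos δ) / d₂ ^ 3
          + (-a + b * sin (π / 6 - δ)) / d₃ ^ 3,
        b * cos (π / 6 + δ) / d₁ ^ 3 + b * sin δ / d₂ ^ 3 - b * cos (π / 6 - δ) / d₃ ^ 3) := by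
  rw [vertexSum_pi_div_three_sub (attraction_periodic a b)]
  simp only [attraction, separation_pi_div_three_sub hd₁, separation_pi_sub hd₂,
    separation_neg_pi_div_three_add hd₃, cos_neg, sin_neg, cos_pi_sub, sin_pi_sub,
    cos_pi_div_three_sub, sin_pi_div_three_sub, cos_pi_div_three_add, sin_pi_div_three_add,
    Prod.mk_add_mk]
  congr 1 <;> ring

theorem vertexSum_attraction_outer :
    vertexSum (fun ψ ↦ attraction b a (-ψ)) (π / 3 - δ) =
      ((a * sin (π / 6 + δ) - b) / d₁ ^ 3 + (a * sin (π / 6 - δ) - b) / d₃ ^ 3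
          + (-(a * cos δ) - b) / d₂ ^ 3,
        -(a * cos (π / 6 + δ)) / d₁ ^ 3 + a * cos (π / 6 - δ) / d₃ ^ 3
          - a * sin δ / d₂ ^ 3) := by
  rw [vertexSum_pi_div_three_sub (attraction_neg_periodic b a)]
  simp only [attraction, separation_neg_comm, separation_pi_div_three_sub hd₁,
    separation_pi_sub hd₂, separation_neg_pi_div_three_add hd₃, cos_neg, sin_neg, cos_pi_sub,
    sin_pi_sub, cos_pi_div_three_sub, sin_pi_div_three_sub, cos_pi_div_three_add,
    sin_pi_div_three_add, Prod.mk_add_mk]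
  congr 1 <;> ring

end ExplicitForces

theorem isMotion_of_deriv_eq {m : ℝ} {r₁ r₂ θ β δ A₁ B₁ A₂ B₂ : ℝ → ℝ}
    (hr₁ : ∀ t, 0 < r₁ t) (hr₂ : ∀ t, 0 < r₂ t)
    (hr₁d : Differentiable ℝ r₁) (hr₁d2 : Differentiable ℝ (deriv r₁))
    (hr₂d : Differentiable ℝ r₂) (hr₂d2 : Differentiable ℝ (deriv r₂))
    (hθd : Differentiable ℝ θ) (hθd2 : Differentiable ℝ (deriv θ))
    (hβd : Differentiable ℝ β) (hβd2 : Differentiable ℝ (deriv β))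
    (hδ : ∀ t, δ t = θ t - β t)
    (hsep : ∀ t, ∀ k < 3, separation (r₁ t) (r₂ t) (π / 3 - δ t + k • (2 * π / 3)) ≠ 0)
    (hinner : ∀ t, vertexSum (attraction (r₁ t) (r₂ t)) (π / 3 - δ t) = (A₁ t, B₁ t))
    (houter : ∀ t, vertexSum (fun ψ ↦ attraction (r₂ t) (r₁ t) (-ψ)) (π / 3 - δ t) =
      (A₂ t, B₂ t))
    (hODE : ∀ t,
      deriv (deriv θ) t = (m * B₁ t - 2 * deriv r₁ t * deriv θ t) / r₁ t
      ∧ deriv (deriv r₁) t = r₁ t * deriv θ t ^ 2 - 1 / (√3 * r₁ t ^ 2) + m * A₁ t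
      ∧ deriv (deriv β) t = (B₂ t - 2 * deriv r₂ t * deriv β t) / r₂ t
      ∧ deriv (deriv r₂) t = r₂ t * deriv β t ^ 2 + A₂ t - m / (√3 * r₂ t ^ 2)) :
    IsMotion 1 m (fun t ↦ (r₁ t, θ t)) (fun t ↦ (r₂ t, β t + π / 3))
      (fun t ↦ (deriv r₁ t, deriv θ t)) (fun t ↦ (deriv r₂ t, deriv β t)) := by
  have angle (t : ℝ) : β t + π / 3 - θ t = π / 3 - δ t := by rw [hδ]; ring
  refine ⟨fun t ↦ ?_, fun t ↦ ⟨hr₁ t, hr₂ t⟩, fun t ↦ by simpa only [angle] using hsep t⟩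
  have velocity := ((hr₁d t).hasDerivAt.prodMk (hθd t).hasDerivAt).prodMk
    ((hr₂d t).hasDerivAt.prodMk ((hβd t).hasDerivAt.add_const (π / 3)))
  have acceleration := ((hr₁d2 t).hasDerivAt.prodMk (hθd2 t).hasDerivAt).prodMk
    ((hr₂d2 t).hasDerivAt.prodMk (hβd2 t).hasDerivAt)
  obtain ⟨hθ'', hr₁'', hβ'', hr₂''⟩ := hODE t
  rw [hθ'', hr₁'', hβ'', hr₂'', add_sub_right_comm] at acceleration
  simpa only [vectorField, polarAcceleration, angle, hinner, houter, Prod.smul_mk, smul_eq_mul,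
    one_mul] using velocity.prodMk acceleration

theorem IsMotion.exists_lipschitzOnWith {m₁ m₂ : ℝ} {x y v w : ℝ → ℝ × ℝ}
    (h : IsMotion m₁ m₂ x y v w) (t : ℝ) :
    ∃ K, ∃ s ∈ 𝓝 ((x t, y t), (v t, w t)), LipschitzOnWith K (vectorField m₁ m₂) s :=
  (contDiffAt_vectorField m₁ m₂ (h.radius_pos t).1.ne' (h.radius_pos t).2.ne'
    (h.separation_ne_zero t)).exists_lipschitzOnWith

theorem IsMotion.add_eq_add_shift {m₁ m₂ : ℝ} {x y v w : ℝ → ℝ × ℝ}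
    (h : IsMotion m₁ m₂ x y v w) {t₀ T α : ℝ} {n : ℤ}
    (hx : x (t₀ + T) = x t₀ + (0, α)) (hy : y (t₀ + T) = y t₀ + (0, α - n * (2 * π / 3)))
    (hv : v (t₀ + T) = v t₀) (hw : w (t₀ + T) = w t₀) (t : ℝ) :
    x (t + T) = x t + (0, α) ∧ y (t + T) = y t + (0, α - n * (2 * π / 3)) := by
  have state := add_eq_add_of_isIntegralCurve_of_lipschitzOnWith
    (v := fun _ ↦ vectorField m₁ m₂) (t₀ := t₀) (T := T)
    (fun _ ↦ vectorField_periodic m₁ m₂ α n)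
    (fun t ↦ (h.exists_lipschitzOnWith t).imp fun _ ⟨s, hs, hK⟩ ↦ ⟨s, hs, .of_forall fun _ ↦ hK⟩)
    h.isIntegralCurve (by simp only [hx, hy, hv, hw, Prod.mk_add_mk, add_zero]) t
  exact Prod.mk.inj (congrArg Prod.fst state)

end TwoTriangle

end

open TwoTriangle in
theorem six_body_periodic_up_to_rotation_general {m₁ m₂ : ℝ} {x y v w : ℝ → ℝ × ℝ}
    (h : IsMotion m₁ m₂ x y v w) {t₀ T α : ℝ} {n : ℤ}
    (hx : x (t₀ + T) = x t₀ + (0, α)) (hy : y (t₀ + T) = y t₀ + (0, α - n * (2 * π / 3)))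
    (hv : v (t₀ + T) = v t₀) (hw : w (t₀ + T) = w t₀) (t : ℝ) :
    x (t + T) = x t + (0, α) ∧ y (t + T) = y t + (0, α - n * (2 * π / 3)) ∧
      ∀ k, vertex (x (t + T)) k = rotation α (vertex (x t) k) ∧
        vertex (y (t + T)) k = rotation α (vertex (y t) (k - n)) := by
  obtain ⟨hxt, hyt⟩ := h.add_eq_add_shift hx hy hv hw t
  refine ⟨hxt, hyt, fun k ↦ ⟨by rw [hxt, rotation_vertex], ?_⟩⟩
  have shift : (0, α - n * (2 * π / 3)) = (0, α) - ((0 : ℝ), n * (2 * π / 3)) := by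
    rw [Prod.mk_sub_mk, sub_zero]
  rw [hyt, rotation_vertex, vertex_sub_int, shift, add_sub_assoc]

/-- A solution of the reduced 6-body system whose return conditions hold at
time `T` is periodic up to a rotation by `θ T` and a cyclic relabeling of
bodies 4, 5, 6. -/
theorem six_body_periodic_up_to_rotation
    (m2 : ℝ) (hm2 : 0 < m2)
    (x1 x2 : ℝ) (hx1 : 0 < x1) (hx2 : 0 < x2) (x3 x4 : ℝ)
    (r1 r2 θ β : ℝ → ℝ)
    (hr1pos : ∀ t, 0 < r1 t) (hr2pos : ∀ t, 0 < r2 t)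
    (hr1d : Differentiable ℝ r1) (hr1d2 : Differentiable ℝ (deriv r1))
    (hr2d : Differentiable ℝ r2) (hr2d2 : Differentiable ℝ (deriv r2))
    (hθd : Differentiable ℝ θ) (hθd2 : Differentiable ℝ (deriv θ))
    (hβd : Differentiable ℝ β) (hβd2 : Differentiable ℝ (deriv β))
    (δ d1 d2 d3 A1 B1 A2 B2 : ℝ → ℝ)
    (hδ : ∀ t, δ t = θ t - β t)
    (hd1 : ∀ t, d1 t =
      Real.sqrt ((r1 t)^2 - 2 * r1 t * r2 t * Real.sin (π/6 + δ t) + (r2 t)^2))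
    (hd2 : ∀ t, d2 t =
      Real.sqrt ((r1 t)^2 + 2 * r1 t * r2 t * Real.cos (δ t) + (r2 t)^2))
    (hd3 : ∀ t, d3 t =
      Real.sqrt ((r1 t)^2 - 2 * r1 t * r2 t * Real.sin (π/6 - δ t) + (r2 t)^2))
    (hd1pos : ∀ t, 0 < d1 t) (hd2pos : ∀ t, 0 < d2 t) (hd3pos : ∀ t, 0 < d3 t)
    (hA1 : ∀ t, A1 t =
      (-(r1 t) + r2 t * Real.sin (π/6 + δ t)) / (d1 t)^3
      + (-(r1 t) - r2 t * Real.cos (δ t)) / (d2 t)^3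
      + (-(r1 t) + r2 t * Real.sin (π/6 - δ t)) / (d3 t)^3)
    (hB1 : ∀ t, B1 t =
      r2 t * Real.cos (π/6 + δ t) / (d1 t)^3
      + r2 t * Real.sin (δ t) / (d2 t)^3
      - r2 t * Real.cos (π/6 - δ t) / (d3 t)^3)
    (hA2 : ∀ t, A2 t =
      (r1 t * Real.sin (π/6 + δ t) - r2 t) / (d1 t)^3
      + (r1 t * Real.sin (π/6 - δ t) - r2 t) / (d3 t)^3
      + (-(r1 t * Real.cos (δ t)) - r2 t) / (d2 t)^3)
    (hB2 : ∀ t, B2 t =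
      -(r1 t * Real.cos (π/6 + δ t)) / (d1 t)^3
      + r1 t * Real.cos (π/6 - δ t) / (d3 t)^3
      - r1 t * Real.sin (δ t) / (d2 t)^3)
    (hODE : ∀ t : ℝ,
      deriv (deriv θ) t = (m2 * B1 t - 2 * deriv r1 t * deriv θ t) / r1 t
      ∧ deriv (deriv r1) t =
          r1 t * (deriv θ t)^2 - 1 / (Real.sqrt 3 * (r1 t)^2) + m2 * A1 t
      ∧ deriv (deriv β) t = (B2 t - 2 * deriv r2 t * deriv β t) / r2 t
      ∧ deriv (deriv r2) t =
          r2 t * (deriv β t)^2 + A2 t - m2 / (Real.sqrt 3 * (r2 t)^2))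
    (hinit1 : r1 0 = x1) (hinit2 : r2 0 = x2)
    (hinit3 : θ 0 = 0) (hinit4 : β 0 = 0)
    (hinit5 : deriv r1 0 = 0) (hinit6 : deriv r2 0 = 0)
    (hinit7 : deriv θ 0 = x3) (hinit8 : deriv β 0 = x4)
    (T : ℝ) (hT : 0 < T)
    (hret1 : r1 T = x1) (hret2 : r2 T = x2)
    (hret3 : deriv r1 T = 0) (hret4 : deriv r2 T = 0)
    (hret5 : deriv θ T = x3) (hret6 : deriv β T = x4)
    (hret7 : θ T - β T = 2*π/3)
    (bodies : Fin 6 → ℝ → EuclideanSpace ℝ (Fin 2))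
    (hb0 : ∀ t, bodies 0 t = vec2 (r1 t * Real.cos (θ t)) (r1 t * Real.sin (θ t)))
    (hb1 : ∀ t, bodies 1 t =
      vec2 (r1 t * Real.cos (θ t + 2*π/3)) (r1 t * Real.sin (θ t + 2*π/3)))
    (hb2 : ∀ t, bodies 2 t =
      vec2 (r1 t * Real.cos (θ t + 4*π/3)) (r1 t * Real.sin (θ t + 4*π/3)))
    (hb3 : ∀ t, bodies 3 t =
      vec2 (r2 t * Real.cos (β t + π/3)) (r2 t * Real.sin (β t + π/3)))
    (hb4 : ∀ t, bodies 4 t =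
      vec2 (r2 t * Real.cos (β t + π/3 + 2*π/3)) (r2 t * Real.sin (β t + π/3 + 2*π/3)))
    (hb5 : ∀ t, bodies 5 t =
      vec2 (r2 t * Real.cos (β t + π/3 + 4*π/3)) (r2 t * Real.sin (β t + π/3 + 4*π/3)))
    (R : EuclideanSpace ℝ (Fin 2) → EuclideanSpace ℝ (Fin 2))
    (hR : ∀ v, R v = vec2 (Real.cos (θ T) * v 0 - Real.sin (θ T) * v 1)
                          (Real.sin (θ T) * v 0 + Real.cos (θ T) * v 1)) :
    (∀ t : ℝ, r1 (t + T) = r1 t ∧ r2 (t + T) = r2 t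
        ∧ θ (t + T) = θ t + θ T ∧ β (t + T) = β t + θ T - 2*π/3)
    ∧ (∀ t : ℝ, bodies 0 (t + T) = R (bodies 0 t)
        ∧ bodies 1 (t + T) = R (bodies 1 t)
        ∧ bodies 2 (t + T) = R (bodies 2 t)
        ∧ bodies 3 (t + T) = R (bodies 5 t)
        ∧ bodies 4 (t + T) = R (bodies 3 t)
        ∧ bodies 5 (t + T) = R (bodies 4 t)) := by
  have motion := TwoTriangle.isMotion_of_deriv_eq hr1pos hr2pos hr1d hr1d2 hr2d hr2d2 hθd hθd2
    hβd hβd2 hδ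
    (fun t ↦ TwoTriangle.separation_vertex_ne_zero (hd1 t) (hd2 t) (hd3 t) (hd1pos t) (hd2pos t)
      (hd3pos t))
    (fun t ↦ by rw [hA1, hB1, TwoTriangle.vertexSum_attraction_inner (hd1 t) (hd2 t) (hd3 t)])
    (fun t ↦ by rw [hA2, hB2, TwoTriangle.vertexSum_attraction_outer (hd1 t) (hd2 t) (hd3 t)]) hODE
  have hβT : β T = θ T - 2 * π / 3 := by linarith
  have conclusion := six_body_periodic_up_to_rotation_general motion
    (t₀ := 0) (T := T) (α := θ T) (n := 1)
    (by simp [hret1, hinit1, hinit3]) (by simp [hret2, hinit2, hinit4, hβT, add_comm])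
    (by simp [hret3, hret5, hinit5, hinit7]) (by simp [hret4, hret6, hinit6, hinit8])
  simp only [Prod.mk_add_mk, Prod.mk.injEq, add_zero, Int.cast_one, one_mul] at conclusion
  obtain rfl : R = TwoTriangle.rotation (θ T) := funext hR
  refine ⟨fun t ↦ ?_, fun t ↦ ?_⟩
  · obtain ⟨⟨hr1, hθ⟩, ⟨hr2, hβ⟩, -⟩ := conclusion t
    exact ⟨hr1, hr2, hθ, by linarith⟩
  · have vertices := (conclusion t).2.2
    simp only [hb0, hb1, hb2, hb3, hb4, hb5, ← TwoTriangle.vertex_one, ← TwoTriangle.vertex_two]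
    simp only [← TwoTriangle.vertex_zero]
    exact ⟨(vertices 0).1, (vertices 1).1, (vertices 2).1,
      (TwoTriangle.vertex_add_three _ (-1)).symm ▸ (vertices 0).2, (vertices 1).2, (vertices 2).2⟩
end
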